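/- Let h ∈ ℝ[x₁,…,xₙ] be a homogeneous polynomial that is hyperbolic with respect to e ∈ ℝⁿ. If every non-zero point in the boundary of the hyperbolicity cone Λ_e(h) is a smooth point of h (i.e., a point of multiplicity 1 of h), then Λ_e(h) is a spectrahedral shadow, i.e., the image under a linear map of a set of the form {a ∈ ℝᵐ : a₁M₁ + ⋯ + aₘMₘ is positive semidefinite} for real symmetric matrices M₁,…,Mₘ. -/

import Mathlib

open MvPolynomial

/-- The univariate polynomial `t ↦ h(a + t·v)` obtained by restricting a multivariate
polynomial `h` to the line through `a` with direction `v`. -/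
noncomputable def linePoly {n : ℕ} (h : MvPolynomial (Fin n) ℝ) (a v : Fin n → ℝ) :
    Polynomial ℝ :=
  MvPolynomial.aeval (fun i => Polynomial.C (a i) + Polynomial.C (v i) * Polynomial.X) h

/-- A real univariate polynomial has only real roots. -/
def RealRooted (q : Polynomial ℝ) : Prop :=
  ∀ z : ℂ, Polynomial.aeval z q = 0 → z.im = 0

/-- A real univariate polynomial has only non-negative real roots. -/
def NonnegRealRooted (q : Polynomial ℝ) : Prop :=
  ∀ z : ℂ, Polynomial.aeval z q = 0 → z.im = 0 ∧ 0 ≤ z.re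

/-- `h` is hyperbolic in direction `e`: `h(e) ≠ 0` and for all `a` the univariate
polynomial `t ↦ h(a - t·e)` has only real roots. -/
def IsHyperbolic {n : ℕ} (h : MvPolynomial (Fin n) ℝ) (e : Fin n → ℝ) : Prop :=
  MvPolynomial.eval e h ≠ 0 ∧ ∀ a : Fin n → ℝ, RealRooted (linePoly h a (-e))

/-- The hyperbolicity cone `Λ_e(h)`. -/
def hypCone {n : ℕ} (h : MvPolynomial (Fin n) ℝ) (e : Fin n → ℝ) : Set (Fin n → ℝ) :=
  {a | NonnegRealRooted (linePoly h a (-e))}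

/-- multiplicity (order of vanishing) of `h` at `a`: the smallest `m` such that the
degree-`m` homogeneous component of `h(x + a)` is non-zero. -/
noncomputable def multAt {n : ℕ} (h : MvPolynomial (Fin n) ℝ) (a : Fin n → ℝ) : ℕ :=
  sInf {m | MvPolynomial.homogeneousComponent m
    (MvPolynomial.aeval (fun i => MvPolynomial.X i + MvPolynomial.C (a i)) h) ≠ 0}

/-- `p` is a real-zero polynomial with respect to `e`. -/
def IsRealZero {n : ℕ} (p : MvPolynomial (Fin n) ℝ) (e : Fin n → ℝ) : Prop :=
  MvPolynomial.eval e p ≠ 0 ∧ ∀ v : Fin n → ℝ, RealRooted (linePoly p e v)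

/-- The rigidly convex set `S_e(p)` of a real-zero polynomial. -/
def rigidSet {n : ℕ} (p : MvPolynomial (Fin n) ℝ) (e : Fin n → ℝ) : Set (Fin n → ℝ) :=
  {a | ∀ t : ℝ, 0 ≤ t → t < 1 → ¬ (linePoly p e (a - e)).IsRoot t}

/-- A polynomial is strictly quasi-concave at `a` if its Hessian at `a` is negative
definite on the orthogonal complement of its gradient at `a`. -/
def StrictQuasiConcaveAt {n : ℕ} (g : MvPolynomial (Fin n) ℝ) (a : Fin n → ℝ) : Prop :=
  ∀ v : Fin n → ℝ, v ≠ 0 →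
    (∑ i, v i * MvPolynomial.eval a (MvPolynomial.pderiv i g)) = 0 →
    (∑ i, ∑ j, v i * v j *
      MvPolynomial.eval a (MvPolynomial.pderiv i (MvPolynomial.pderiv j g))) < 0

/-- A spectrahedral shadow (cone version): a linear image of
`{a : a₁M₁ + ⋯ + aₘMₘ ⪰ 0}` for real symmetric matrices `Mᵢ`. -/
def IsSpectrahedralShadowCone {n : ℕ} (S : Set (Fin n → ℝ)) : Prop :=
  ∃ (m d : ℕ) (M : Fin m → Matrix (Fin d) (Fin d) ℝ)
    (L : (Fin m → ℝ) →ₗ[ℝ] (Fin n → ℝ)),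
      (∀ i, (M i).IsSymm) ∧ S = L '' {a | (∑ i, a i • M i).PosSemidef}

/-- A spectrahedral shadow: a linear image of
`{b : M₀ + b₁M₁ + ⋯ + bₘMₘ ⪰ 0}` for real symmetric matrices `Mᵢ`. -/
def IsSpectrahedralShadow {n : ℕ} (S : Set (Fin n → ℝ)) : Prop :=
  ∃ (m d : ℕ) (M₀ : Matrix (Fin d) (Fin d) ℝ) (M : Fin m → Matrix (Fin d) (Fin d) ℝ)
    (L : (Fin m → ℝ) →ₗ[ℝ] (Fin n → ℝ)),
      M₀.IsSymm ∧ (∀ i, (M i).IsSymm) ∧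
      S = L '' {b | (M₀ + ∑ i, b i • M i).PosSemidef}

/-- A convex set is pointed if it contains no affine line. -/
def PointedSet {n : ℕ} (S : Set (Fin n → ℝ)) : Prop :=
  ¬ ∃ (a v : Fin n → ℝ), v ≠ 0 ∧ ∀ t : ℝ, a + t • v ∈ S

/-- Directional derivative `∂_e h = Σᵢ eᵢ ∂h/∂xᵢ`. -/
noncomputable def dirDeriv {n : ℕ} (e : Fin n → ℝ) (h : MvPolynomial (Fin n) ℝ) :
    MvPolynomial (Fin n) ℝ :=
  ∑ i, e i • MvPolynomial.pderiv i h

/-!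
By Gårding's theorem `Λ = Λ_e(h)` is a convex cone. Normalise `h e > 0`, fix a boundary point
`v ≠ 0` and a vector `a` with `a ⬝ᵥ v = 1`. Smoothness gives `∇h(v) ≠ 0`, and real-rootedness of `h`
makes its Hessian at `v` negative definite on `ker ∇h(v) ∩ ker a`: a tangent direction along which
it is not negative would span a line inside the boundary of `Λ`, hence a singular boundary point in
the lineality space. By Finsler's lemma the Hessian of `h (1 - (c / 2) h)` minus `c (a ⬝ᵥ ·)²` is
then negative definite for some `c`, uniformly near `v`. A Taylor formula whose remainder separates
the variables `x` and `u` writes, for boundary points `u` near `v` in the slice `a ⬝ᵥ u = 1`, the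
tangent functional `x ↦ ∇h(u) ⬝ᵥ x` on that slice as a sum `∑ j, w j x * (x ⬝ᵥ B j *ᵥ x)`, where the
`B j` are positive semidefinite and the finitely many weights `w j` do not depend on `u` and are
nonnegative on `Λ` near `v`. Hence all these tangent inequalities hold on the shadow cone spanned by
the moment matrices `w j x • (x xᵀ)`, which therefore coincides with `Λ` near `v`. Shadow cones are
closed under sums, so compactness of the set of boundary directions glues these local descriptions,
and adding the ray through `e` recovers `Λ` from its boundary.
-/

/-! ### Spectrahedral shadow cones -/

section PosSemidef

variable {ι κ : Type}

theorem posSemidef_fromBlocks_zero_iff [Finite ι] [Finite κ] {A : Matrix ι ι ℝ} {B : Matrix κ κ ℝ} :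
    (Matrix.fromBlocks A 0 0 B).PosSemidef ↔ A.PosSemidef ∧ B.PosSemidef := by
  cases nonempty_fintype ι
  cases nonempty_fintype κ
  refine ⟨fun h => ⟨h.submatrix Sum.inl, h.submatrix Sum.inr⟩, fun ⟨hA, hB⟩ => ?_⟩
  refine .of_dotProduct_mulVec_nonneg (.fromBlocks hA.1 (by simp) hB.1) fun x => ?_
  have h1 := hA.dotProduct_mulVec_nonneg (x ∘ Sum.inl)
  have h2 := hB.dotProduct_mulVec_nonneg (x ∘ Sum.inr)
  simpa [Matrix.fromBlocks_mulVec, dotProduct] using add_nonneg h1 h2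

theorem trace_mul_nonneg_of_posSemidef [Fintype ι] {B M : Matrix ι ι ℝ}
    (hB : ∀ ξ, 0 ≤ ξ ⬝ᵥ B.mulVec ξ) (hM : M.PosSemidef) : 0 ≤ (B * M).trace := by
  obtain ⟨m, a, rfl⟩ := Matrix.posSemidef_iff_eq_sum_vecMulVec.mp hM
  rw [Finset.mul_sum, Matrix.trace_sum]
  refine Finset.sum_nonneg fun i _ => ?_
  rw [Matrix.mul_vecMulVec, Matrix.trace_vecMulVec, star_trivial, dotProduct_comm]
  exact hB (a i)

end PosSemidef

/-- `S` is the image, under a linear map, of the cone of all `v` in a finite-dimensional space for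
which the matrix `A v` (linear in `v`) is positive semidefinite: the coordinate-free form of
`IsSpectrahedralShadowCone`. Symmetry of all the values of `A` is not required, since positive
semidefiniteness of `A v` includes that of `A v` itself. -/
def IsShadowCone {E : Type} [AddCommGroup E] [Module ℝ E] (S : Set E) : Prop :=
  ∃ (V : Type) (_ : AddCommGroup V) (_ : Module ℝ V) (_ : FiniteDimensional ℝ V)
    (ι : Type) (_ : Fintype ι) (A : V →ₗ[ℝ] Matrix ι ι ℝ) (L : V →ₗ[ℝ] E),
      S = L '' {v | (A v).PosSemidef}

namespace IsShadowCone

variable {E F : Type} [AddCommGroup E] [Module ℝ E] [AddCommGroup F] [Module ℝ F]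
  {S T : Set E}

theorem isSpectrahedralShadowCone {n : ℕ} {S : Set (Fin n → ℝ)} (hS : IsShadowCone S) :
    IsSpectrahedralShadowCone S := by
  obtain ⟨V, _, _, _, ι, _, A, L, rfl⟩ := hS
  let W : Submodule ℝ V :=
    { carrier := {v | (A v).IsSymm}
      add_mem' := fun ha hb => by simpa using Matrix.IsSymm.add ha hb
      zero_mem' := by simp
      smul_mem' := fun c v hv => by simpa using Matrix.IsSymm.smul hv c }
  let b := Module.finBasis ℝ W
  let σ := (Fintype.equivFin ι).symm
  let M := fun i => (A (b i)).submatrix σ σ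
  have sum_eq (a : Fin (Module.finrank ℝ W) → ℝ) :
      ∑ i, a i • M i = (A (b.equivFun.symm a)).submatrix σ σ := by
    ext x y
    simp [M, Module.Basis.equivFun_symm_apply, Matrix.sum_apply]
  refine ⟨_, _, M, L ∘ₗ W.subtype ∘ₗ b.equivFun.symm.toLinearMap, fun i => (b i).2.submatrix _, ?_⟩
  ext x
  simp only [Set.mem_image, Set.mem_ofPred_eq, sum_eq, Matrix.posSemidef_submatrix_equiv]
  constructor
  · rintro ⟨v, hv, rfl⟩
    exact ⟨b.equivFun ⟨v, hv.1⟩, by simpa using hv, by simp⟩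
  · rintro ⟨a, ha, rfl⟩
    exact ⟨_, ha, rfl⟩

theorem zero_mem (hS : IsShadowCone S) : 0 ∈ S := by
  obtain ⟨V, _, _, _, ι, _, A, L, rfl⟩ := hS
  exact ⟨0, by simp [Matrix.PosSemidef.zero], map_zero L⟩

theorem smul_mem (hS : IsShadowCone S) {c : ℝ} (hc : 0 ≤ c) {x : E} (hx : x ∈ S) :
    c • x ∈ S := by
  obtain ⟨V, _, _, _, ι, _, A, L, rfl⟩ := hS
  obtain ⟨v, hv, rfl⟩ := hx
  exact ⟨c • v, by simpa using Matrix.PosSemidef.smul hv hc, map_smul L c v⟩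

theorem image (hS : IsShadowCone S) (f : E →ₗ[ℝ] F) : IsShadowCone (f '' S) := by
  obtain ⟨V, _, _, _, ι, _, A, L, rfl⟩ := hS
  exact ⟨V, _, _, ‹_›, ι, ‹_›, A, f ∘ₗ L, by simp [Set.image_image]⟩

theorem preimage [FiniteDimensional ℝ E] {S : Set F} (hS : IsShadowCone S) (f : E →ₗ[ℝ] F) :
    IsShadowCone (f ⁻¹' S) := by
  obtain ⟨V, _, _, _, ι, _, A, L, rfl⟩ := hS
  let W : Submodule ℝ (E × V) := LinearMap.eqLocus (f ∘ₗ .fst ℝ E V) (L ∘ₗ .snd ℝ E V)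
  refine ⟨W, _, _, inferInstance, ι, ‹_›, A ∘ₗ .snd ℝ E V ∘ₗ W.subtype,
    .fst ℝ E V ∘ₗ W.subtype, ?_⟩
  ext x
  constructor
  · rintro ⟨v, hv, hx⟩
    exact ⟨⟨(x, v), hx.symm⟩, hv, rfl⟩
  · rintro ⟨⟨⟨x, v⟩, hx⟩, hv, rfl⟩
    exact ⟨v, hv, Eq.symm hx⟩

theorem prod {T : Set F} (hS : IsShadowCone S) (hT : IsShadowCone T) :
    IsShadowCone (S ×ˢ T) := by
  obtain ⟨V, _, _, _, ι, _, A, L, rfl⟩ := hS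
  obtain ⟨W, _, _, _, κ, _, B, M, rfl⟩ := hT
  let D : V × W →ₗ[ℝ] Matrix (ι ⊕ κ) (ι ⊕ κ) ℝ :=
    { toFun := fun p => Matrix.fromBlocks (A p.1) 0 0 (B p.2)
      map_add' := fun p q => by simp [Matrix.fromBlocks_add]
      map_smul' := fun c p => by simp [Matrix.fromBlocks_smul] }
  refine ⟨V × W, _, _, inferInstance, ι ⊕ κ, inferInstance, D, L.prodMap M, ?_⟩
  have : {p | (D p).PosSemidef} = {v | (A v).PosSemidef} ×ˢ {w | (B w).PosSemidef} :=
    Set.ext fun p => posSemidef_fromBlocks_zero_iff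
  rw [this, LinearMap.coe_prodMap, Set.prodMap_image_prod]

open scoped Pointwise in
theorem add (hS : IsShadowCone S) (hT : IsShadowCone T) : IsShadowCone (S + T) := by
  rw [← Set.add_image_prod]
  exact (hS.prod hT).image (LinearMap.coprod .id .id)

theorem univ [FiniteDimensional ℝ E] : IsShadowCone (Set.univ : Set E) :=
  ⟨E, _, _, ‹_›, Empty, inferInstance, 0, .id, by simp [Matrix.PosSemidef.zero]⟩

theorem submodule (W : Submodule ℝ E) [FiniteDimensional ℝ W] : IsShadowCone (W : Set E) := by
  simpa using univ.image W.subtype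

theorem inter [FiniteDimensional ℝ E] (hS : IsShadowCone S) (hT : IsShadowCone T) :
    IsShadowCone (S ∩ T) :=
  (hS.prod hT).preimage (LinearMap.prod .id .id)

theorem iInter [FiniteDimensional ℝ E] {J : Type} [Finite J] {S : J → Set E}
    (hS : ∀ j, IsShadowCone (S j)) : IsShadowCone (⋂ j, S j) := by
  have (s : Set J) (hs : s.Finite) : IsShadowCone (⋂ j ∈ s, S j) := by
    induction s, hs using Set.Finite.induction_on with
    | empty => simpa using univ
    | insert _ _ ih => simpa using (hS _).inter ih
  simpa using this Set.univ Set.finite_univ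

theorem setOf_posSemidef [FiniteDimensional ℝ E] {ι : Type} [Finite ι]
    (A : E →ₗ[ℝ] Matrix ι ι ℝ) : IsShadowCone {x | (A x).PosSemidef} :=
  ⟨E, _, _, ‹_›, ι, Fintype.ofFinite ι, A, .id, by simp⟩

theorem setOf_nonneg [FiniteDimensional ℝ E] (f : E →ₗ[ℝ] ℝ) : IsShadowCone {x | 0 ≤ f x} := by
  have nonneg_iff (t : ℝ) : (t • (1 : Matrix Unit Unit ℝ)).PosSemidef ↔ 0 ≤ t :=
    ⟨fun h => by simpa using h.diag_nonneg (i := ()), fun h => Matrix.PosSemidef.one.smul h⟩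
  simpa [nonneg_iff] using setOf_posSemidef (f.smulRight (1 : Matrix Unit Unit ℝ))

theorem ray (e : E) : IsShadowCone {x | ∃ t : ℝ, 0 ≤ t ∧ t • e = x} :=
  (setOf_nonneg .id).image (LinearMap.toSpanSingleton ℝ E e)

end IsShadowCone

/- The witness is the moment relaxation of `K`: the span of the points `(x, F x)`, cut down by
positive semidefiniteness of each block and projected to the first component. -/
theorem exists_isShadowCone_of_posSemidef {E J ι : Type} [AddCommGroup E] [Module ℝ E]
    [FiniteDimensional ℝ E] [Fintype J] [Fintype ι] {K : Set E} {F : E → J → Matrix ι ι ℝ}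
    (hF : ∀ x ∈ K, ∀ j, (F x j).PosSemidef) :
    ∃ T, IsShadowCone T ∧ K ⊆ T ∧ ∀ (l : E →ₗ[ℝ] ℝ) (B : J → Matrix ι ι ℝ),
      (∀ j ξ, 0 ≤ ξ ⬝ᵥ (B j).mulVec ξ) → (∀ x ∈ K, l x = ∑ j, (B j * F x j).trace) →
        ∀ x ∈ T, 0 ≤ l x := by
  let W := Submodule.span ℝ ((fun x => (x, F x)) '' K)
  let P (j : J) : Set (E × (J → Matrix ι ι ℝ)) := {p | (p.2 j).PosSemidef}
  have hP (j : J) : IsShadowCone (P j) :=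
    .setOf_posSemidef (.proj j ∘ₗ .snd ℝ E (J → Matrix ι ι ℝ))
  refine ⟨_, ((IsShadowCone.submodule W).inter (.iInter hP)).image (.fst ℝ _ _), fun x hx => ?_,
    fun l B hB hl => ?_⟩
  · exact ⟨(x, F x), ⟨Submodule.subset_span ⟨x, hx, rfl⟩, Set.mem_iInter.2 (hF x hx)⟩, rfl⟩
  · have l_eq : ∀ p ∈ W, l p.1 = ∑ j, (B j * p.2 j).trace := by
      intro p hp
      induction hp using Submodule.span_induction with
      | mem p hp =>
        obtain ⟨x, hx, rfl⟩ := hp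
        exact hl x hx
      | zero => simp
      | add p q _ _ hp hq => simp [hp, hq, mul_add, Finset.sum_add_distrib]
      | smul c p _ hp => simp [hp, Finset.mul_sum]
    rintro _ ⟨p, ⟨hpW, hpP⟩, rfl⟩
    rw [LinearMap.fst_apply, l_eq p hpW]
    exact Finset.sum_nonneg fun j _ =>
      trace_mul_nonneg_of_posSemidef (hB j) (Set.mem_iInter.1 hpP j)

theorem isShadowCone_setOf_norm_sub_le {n : ℕ} (φ : (Fin n → ℝ) →ₗ[ℝ] ℝ) (v : Fin n → ℝ) {r : ℝ}
    (hr : 0 < r) : IsShadowCone {x | ‖x - φ x • v‖ ≤ r * φ x} := by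
  have hslab (i : Fin n) : IsShadowCone {x : Fin n → ℝ | |x i - φ x * v i| ≤ r * φ x} := by
    let ψ : (Fin n → ℝ) →ₗ[ℝ] ℝ := .proj i - v i • φ
    convert (IsShadowCone.setOf_nonneg (r • φ - ψ)).inter (.setOf_nonneg (r • φ + ψ)) using 1
    ext x
    simp only [ψ, Set.mem_ofPred_eq, Set.mem_inter_iff, abs_le, LinearMap.sub_apply,
      LinearMap.add_apply, LinearMap.smul_apply, LinearMap.proj_apply, smul_eq_mul]
    constructor <;> rintro ⟨h1, h2⟩ <;> constructor <;> linarith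
  convert (IsShadowCone.setOf_nonneg φ).inter (.iInter hslab) using 1
  ext x
  simp only [Set.mem_ofPred_eq, Set.mem_inter_iff, Set.mem_iInter]
  have norm_le_iff (h : 0 ≤ r * φ x) := pi_norm_le_iff_of_nonneg (x := x - φ x • v) h
  constructor
  · intro hx
    have h : 0 ≤ r * φ x := (norm_nonneg _).trans hx
    exact ⟨nonneg_of_mul_nonneg_right h hr, (norm_le_iff h).1 hx⟩
  · rintro ⟨hφ, hx⟩
    exact (norm_le_iff (mul_nonneg hr.le hφ)).2 hx

theorem exists_isShadowCone_of_isCompact {E : Type} [AddCommGroup E] [Module ℝ E]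
    [TopologicalSpace E] {C K : Set E} (hK : IsCompact K) (h0 : 0 ∈ C)
    (hadd : ∀ x ∈ C, ∀ y ∈ C, x + y ∈ C)
    (hlocal : ∀ v ∈ K, ∃ T ⊆ C, IsShadowCone T ∧ T ∈ nhdsWithin v K) :
    ∃ S ⊆ C, IsShadowCone S ∧ K ⊆ S := by
  refine hK.induction_on (p := fun s => ∃ S ⊆ C, IsShadowCone S ∧ s ⊆ S) ?_ ?_ ?_ fun v hv => ?_
  · exact ⟨(⊥ : Submodule ℝ E), by simpa using h0, .submodule ⊥, Set.empty_subset _⟩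
  · rintro s t hst ⟨S, hSC, hS, htS⟩
    exact ⟨S, hSC, hS, hst.trans htS⟩
  · rintro s t ⟨S, hSC, hS, hsS⟩ ⟨T, hTC, hT, htT⟩
    open scoped Pointwise in
    refine ⟨S + T, ?_, hS.add hT, Set.union_subset ?_ ?_⟩
    · rintro _ ⟨x, hx, y, hy, rfl⟩
      exact hadd x (hSC hx) y (hTC hy)
    · exact fun x hx => ⟨x, hsS hx, 0, hT.zero_mem, add_zero x⟩
    · exact fun x hx => ⟨0, hS.zero_mem, x, htT hx, zero_add x⟩
  · obtain ⟨T, hTC, hT, hv⟩ := hlocal v hv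
    exact ⟨T, hv, T, hTC, hT, subset_rfl⟩

/-! ### Quadratic forms on `ℝⁿ` -/

section QuadraticForms

variable {n : ℕ}

theorem isCompact_setOf_dotProduct_self_eq_one : IsCompact {ξ : Fin n → ℝ | ξ ⬝ᵥ ξ = 1} := by
  refine Metric.isCompact_of_isClosed_isBounded (isClosed_eq (by fun_prop) continuous_const)
    (isBounded_iff_forall_norm_le.2 ⟨1, fun ξ hξ => ?_⟩)
  refine (pi_norm_le_iff_of_nonneg zero_le_one).2 fun a => ?_
  rw [Real.norm_eq_abs, abs_le_one_iff_mul_self_le_one, ← hξ.out]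
  exact Finset.single_le_sum (f := fun a => ξ a * ξ a) (fun b _ => mul_self_nonneg _)
    (Finset.mem_univ a)

theorem le_mul_dotProduct_self_of_homogeneous {F : (Fin n → ℝ) → ℝ} {b : ℝ}
    (hF : ∀ (r : ℝ) ξ, F (r • ξ) = r ^ 2 * F ξ) (hb : ∀ ξ, ξ ⬝ᵥ ξ = 1 → F ξ ≤ b)
    (ξ : Fin n → ℝ) : F ξ ≤ b * (ξ ⬝ᵥ ξ) := by
  rcases eq_or_ne ξ 0 with rfl | hξ
  · simpa using (hF 0 0).le
  · have hpos : 0 < ξ ⬝ᵥ ξ := by simpa using Matrix.dotProduct_star_self_pos_iff.2 hξ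
    have hsq : √(ξ ⬝ᵥ ξ) ^ 2 = ξ ⬝ᵥ ξ := Real.sq_sqrt hpos.le
    have h1 := hb ((√(ξ ⬝ᵥ ξ))⁻¹ • ξ) (by
      rw [dotProduct_smul, smul_dotProduct, smul_smul, ← sq, inv_pow, hsq, smul_eq_mul,
        inv_mul_cancel₀ hpos.ne'])
    rw [hF, inv_pow, hsq, inv_mul_le_iff₀ hpos] at h1
    linarith

/-- **Finsler's lemma**, uniform version. -/
theorem exists_add_mul_le_neg_mul_dotProduct_self {A B : (Fin n → ℝ) → ℝ} (hA : Continuous A)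
    (hB : Continuous B) (hAs : ∀ (r : ℝ) ξ, A (r • ξ) = r ^ 2 * A ξ)
    (hBs : ∀ (r : ℝ) ξ, B (r • ξ) = r ^ 2 * B ξ) (hB0 : ∀ ξ, 0 ≤ B ξ)
    (hAB : ∀ ξ, ξ ≠ 0 → B ξ = 0 → A ξ < 0) :
    ∃ c δ : ℝ, 0 < δ ∧ ∀ ξ, A ξ - c * B ξ ≤ -δ * (ξ ⬝ᵥ ξ) := by
  let U (N : ℕ) : Set (Fin n → ℝ) := {ξ | A ξ - N * B ξ < -(1 / ((N : ℝ) + 1))}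
  have hU (N) : IsOpen (U N) := isOpen_lt (by fun_prop) continuous_const
  have hmono : Monotone U := by
    intro N M hNM ξ hξ
    have h1 : (N : ℝ) * B ξ ≤ M * B ξ := by have := hB0 ξ; gcongr
    have h2 := Nat.one_div_le_one_div (α := ℝ) hNM
    simp only [U, Set.mem_ofPred_eq] at *
    linarith
  have hcov : {ξ : Fin n → ℝ | ξ ⬝ᵥ ξ = 1} ⊆ ⋃ N, U N := by
    intro ξ hξ
    rw [Set.mem_iUnion]
    have hne : ξ ≠ 0 := by rintro rfl; simp at hξ
    rcases (hB0 ξ).eq_or_lt with hb | hb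
    · obtain ⟨N, hN⟩ := exists_nat_one_div_lt (neg_pos.2 (hAB ξ hne hb.symm))
      refine ⟨N, ?_⟩
      simp only [U, Set.mem_ofPred_eq, ← hb]
      linarith
    · obtain ⟨N, hN⟩ := exists_nat_gt ((A ξ + 1) / B ξ)
      refine ⟨N, ?_⟩
      rw [div_lt_iff₀ hb] at hN
      have : 1 / ((N : ℝ) + 1) ≤ 1 := (div_le_one (by positivity)).2 (by simp)
      simp only [U, Set.mem_ofPred_eq]
      linarith
  obtain ⟨N, hN⟩ := isCompact_setOf_dotProduct_self_eq_one.elim_directed_cover U hU hcov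
    hmono.directed_le
  refine ⟨N, 1 / ((N : ℝ) + 1), by positivity, le_mul_dotProduct_self_of_homogeneous
    (fun r ξ => ?_) fun ξ hξ => (hN hξ).le⟩
  rw [hAs, hBs]
  ring

theorem smul_dotProduct_mulVec_smul (B : Matrix (Fin n) (Fin n) ℝ) (r : ℝ) (ξ : Fin n → ℝ) :
    (r • ξ) ⬝ᵥ B.mulVec (r • ξ) = r ^ 2 * (ξ ⬝ᵥ B.mulVec ξ) := by
  simp only [Matrix.mulVec_smul, dotProduct_smul, smul_dotProduct, smul_eq_mul]
  ring

theorem dotProduct_vecMulVec_mulVec (a b ξ : Fin n → ℝ) :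
    ξ ⬝ᵥ (Matrix.vecMulVec a b).mulVec ξ = (a ⬝ᵥ ξ) * (b ⬝ᵥ ξ) := by
  simp [Matrix.vecMulVec_mulVec, dotProduct_comm ξ a, mul_comm]

theorem eventually_dotProduct_mulVec_le {X : Type} [TopologicalSpace X]
    {C : X → Matrix (Fin n) (Fin n) ℝ} (hC : Continuous C) {v : X} {b : ℝ}
    (hb : ∀ ξ, ξ ⬝ᵥ ξ = 1 → ξ ⬝ᵥ (C v).mulVec ξ < b) :
    ∀ᶠ u in nhds v, ∀ ξ, ξ ⬝ᵥ (C u).mulVec ξ ≤ b * (ξ ⬝ᵥ ξ) := by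
  have h1 : ∀ᶠ u in nhds v, ∀ ξ ∈ {ξ : Fin n → ℝ | ξ ⬝ᵥ ξ = 1}, ξ ⬝ᵥ (C u).mulVec ξ < b := by
    refine isCompact_setOf_dotProduct_self_eq_one.eventually_forall_of_forall_eventually
      fun ξ hξ => ?_
    have hc : Continuous fun p : X × (Fin n → ℝ) => p.2 ⬝ᵥ (C p.1).mulVec p.2 := by fun_prop
    exact (isOpen_lt hc continuous_const).mem_nhds (hb ξ hξ)
  filter_upwards [h1] with u hu
  exact le_mul_dotProduct_self_of_homogeneous (smul_dotProduct_mulVec_smul (C u))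
    fun ξ hξ => (hu ξ hξ).le

theorem eventually_le_dotProduct_mulVec {X : Type} [TopologicalSpace X]
    {C : X → Matrix (Fin n) (Fin n) ℝ} (hC : Continuous C) {v : X} {b : ℝ}
    (hb : ∀ ξ, ξ ⬝ᵥ ξ = 1 → b < ξ ⬝ᵥ (C v).mulVec ξ) :
    ∀ᶠ u in nhds v, ∀ ξ, b * (ξ ⬝ᵥ ξ) ≤ ξ ⬝ᵥ (C u).mulVec ξ := by
  have := eventually_dotProduct_mulVec_le (C := fun u => -C u) (v := v) (b := -b) hC.neg
  simp only [Matrix.neg_mulVec, dotProduct_neg, neg_mul, neg_lt_neg_iff, neg_le_neg_iff] at this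
  exact this hb

theorem exists_pos_eventually_abs_dotProduct_mulVec_le {ι X : Type} [Finite ι] [TopologicalSpace X]
    {C : ι → X → Matrix (Fin n) (Fin n) ℝ} (hC : ∀ k, Continuous (C k)) (v : X) :
    ∃ M : ℝ, 0 < M ∧ ∀ᶠ u in nhds v, ∀ k ξ, |ξ ⬝ᵥ (C k u).mulVec ξ| ≤ M * (ξ ⬝ᵥ ξ) := by
  cases nonempty_fintype ι
  have (k : ι) : ∃ M, ∀ ξ ∈ {ξ : Fin n → ℝ | ξ ⬝ᵥ ξ = 1}, ‖ξ ⬝ᵥ (C k v).mulVec ξ‖ ≤ M :=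
    isCompact_setOf_dotProduct_self_eq_one.exists_bound_of_continuousOn (by fun_prop)
  choose M hM using this
  have hlt (k : ι) (ξ : Fin n → ℝ) (hξ : ξ ⬝ᵥ ξ = 1) :
      |ξ ⬝ᵥ (C k v).mulVec ξ| < ∑ k, |M k| + 1 := by
    have := Finset.single_le_sum (f := fun k => |M k|) (fun _ _ => abs_nonneg _)
      (Finset.mem_univ k)
    linarith [le_abs_self (M k), Real.norm_eq_abs _ ▸ hM k ξ hξ]
  refine ⟨∑ k, |M k| + 1, by positivity, Filter.eventually_all.2 fun k => ?_⟩
  filter_upwards [eventually_dotProduct_mulVec_le (hC k) fun ξ hξ => (abs_lt.1 (hlt k ξ hξ)).2,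
    eventually_le_dotProduct_mulVec (hC k) fun ξ hξ => (abs_lt.1 (hlt k ξ hξ)).1] with u hu hu' ξ
  exact abs_le.2 ⟨by linarith [hu' ξ], hu ξ⟩

end QuadraticForms

/-! ### Gradient, Hessian and the second-order Taylor formula -/

section Taylor

variable {n d : ℕ} (p q : MvPolynomial (Fin n) ℝ) (a u v x : Fin n → ℝ)

/-- The gradient of the polynomial `p` at the point `a`. -/
noncomputable def polyGradient : Fin n → ℝ :=
  fun i => eval a (pderiv i p)

/-- The Hessian matrix of the polynomial `p` at the point `a`. -/
noncomputable def polyHessian : Matrix (Fin n) (Fin n) ℝ :=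
  .of fun i j => eval a (pderiv j (pderiv i p))

theorem continuous_polyGradient : Continuous (polyGradient p) :=
  continuous_pi fun _ => continuous_eval _

theorem polyGradient_C (c : ℝ) : polyGradient (C c) a = 0 := by
  ext; simp [polyGradient]

theorem polyGradient_X (i : Fin n) : polyGradient (X i) a = Pi.single i 1 := by
  ext j
  simp [polyGradient, pderiv_X, Pi.single_apply, eq_comm, apply_ite (eval a)]

theorem polyGradient_neg : polyGradient (-p) a = -polyGradient p a := by
  ext; simp [polyGradient]

theorem polyGradient_add : polyGradient (p + q) a = polyGradient p a + polyGradient q a := by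
  ext; simp [polyGradient]

theorem polyGradient_mul :
    polyGradient (p * q) a = eval a p • polyGradient q a + eval a q • polyGradient p a := by
  ext; simp [polyGradient]

theorem polyHessian_C (c : ℝ) : polyHessian (C c) a = 0 := by
  ext; simp [polyHessian]

theorem polyHessian_X (i : Fin n) : polyHessian (X i) a = 0 := by
  ext j k
  by_cases h : i = j <;> simp [polyHessian, pderiv_X, Pi.single_apply, h]

theorem polyHessian_add : polyHessian (p + q) a = polyHessian p a + polyHessian q a := by
  ext; simp [polyHessian]

theorem polyHessian_mul : polyHessian (p * q) a =
    eval a p • polyHessian q a + eval a q • polyHessian p a +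
    Matrix.vecMulVec (polyGradient p a) (polyGradient q a) +
    Matrix.vecMulVec (polyGradient q a) (polyGradient p a) := by
  ext
  simp only [polyHessian, polyGradient, Matrix.vecMulVec_apply, Matrix.of_apply, Matrix.add_apply,
    Matrix.smul_apply, Derivation.leibniz, map_add, map_mul, smul_eq_mul]
  ring

theorem hasDerivAt_eval_add_smul (t : ℝ) :
    HasDerivAt (fun t : ℝ => eval (a + t • v) p) (v ⬝ᵥ polyGradient p (a + t • v)) t := by
  induction p using MvPolynomial.induction_on with
  | C c => simpa [polyGradient_C] using hasDerivAt_const t c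
  | add p q hp hq => simpa [polyGradient_add] using hp.fun_add hq
  | mul_X p i hp =>
    have hX : HasDerivAt (fun t : ℝ => a i + t * v i) (v i) t := by
      simpa using ((hasDerivAt_id t).mul_const (v i)).const_add (a i)
    simpa [polyGradient_mul, polyGradient_X, mul_comm, add_comm] using hp.fun_mul hX

theorem hasDerivAt_dotProduct_polyGradient (w : Fin n → ℝ) (t : ℝ) :
    HasDerivAt (fun t : ℝ => v ⬝ᵥ polyGradient p (a + t • w))
      (v ⬝ᵥ (polyHessian p (a + t • w)).mulVec w) t := by
  refine HasDerivAt.fun_sum fun i _ => ?_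
  have := (hasDerivAt_eval_add_smul (pderiv i p) a w t).const_mul (v i)
  rwa [dotProduct_comm] at this

variable {p} in
theorem dotProduct_polyGradient_self (hp : p.IsHomogeneous d) :
    a ⬝ᵥ polyGradient p a = d * eval a p := by
  simpa [dotProduct, polyGradient] using congrArg (eval a) hp.sum_X_mul_pderiv

/-- A matrix kernel `R x u` is *separated* if it is a finite sum of products of a continuous
scalar function of `x` and a continuous matrix function of `u`. -/
def IsSeparatedKernel (R : (Fin n → ℝ) → (Fin n → ℝ) → Matrix (Fin n) (Fin n) ℝ) : Prop :=
  ∃ (ι : Type) (_ : Fintype ι) (m : ι → (Fin n → ℝ) → ℝ)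
    (c : ι → (Fin n → ℝ) → Matrix (Fin n) (Fin n) ℝ),
    (∀ k, Continuous (m k)) ∧ (∀ k, Continuous (c k)) ∧ ∀ x u, R x u = ∑ k, m k x • c k u

namespace IsSeparatedKernel

variable {R S : (Fin n → ℝ) → (Fin n → ℝ) → Matrix (Fin n) (Fin n) ℝ}

theorem of_continuous {c : (Fin n → ℝ) → Matrix (Fin n) (Fin n) ℝ} (hc : Continuous c) :
    IsSeparatedKernel fun _ u => c u :=
  ⟨Unit, inferInstance, fun _ _ => 1, fun _ => c, fun _ => continuous_const, fun _ => hc, by simp⟩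

theorem add (hR : IsSeparatedKernel R) (hS : IsSeparatedKernel S) :
    IsSeparatedKernel fun x u => R x u + S x u := by
  obtain ⟨ι, _, m, c, hm, hc, hR⟩ := hR
  obtain ⟨κ, _, m', c', hm', hc', hS⟩ := hS
  exact ⟨ι ⊕ κ, inferInstance, Sum.elim m m', Sum.elim c c', Sum.rec hm hm', Sum.rec hc hc',
    fun x u => by simp [hR, hS]⟩

theorem smul (hR : IsSeparatedKernel R) {f : (Fin n → ℝ) → ℝ} (hf : Continuous f) :
    IsSeparatedKernel fun x u => f x • R x u := by
  obtain ⟨ι, _, m, c, hm, hc, hR⟩ := hR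
  exact ⟨ι, ‹_›, fun k x => f x * m k x, c, fun k => hf.mul (hm k), hc,
    fun x u => by simp [hR, Finset.smul_sum, smul_smul]⟩

theorem continuous_right (hR : IsSeparatedKernel R) (x : Fin n → ℝ) : Continuous (R x) := by
  obtain ⟨ι, _, m, c, -, hc, hR⟩ := hR
  rw [funext (hR x)]
  exact continuous_finsetSum _ fun k _ => (hc k).const_smul (m k x)

end IsSeparatedKernel

theorem exists_taylor_eval : ∃ R, IsSeparatedKernel R ∧
    (∀ u x, eval x p = eval u p + (x - u) ⬝ᵥ polyGradient p u +
      (x - u) ⬝ᵥ (R x u).mulVec (x - u)) ∧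
    ∀ u ξ, ξ ⬝ᵥ (polyHessian p u).mulVec ξ = 2 * (ξ ⬝ᵥ (R u u).mulVec ξ) := by
  induction p using MvPolynomial.induction_on with
  | C c =>
    exact ⟨fun _ _ => 0, .of_continuous continuous_const, by simp [polyGradient_C],
      by simp [polyHessian_C]⟩
  | add p q hp hq =>
    obtain ⟨R, hR, hp, hRp⟩ := hp
    obtain ⟨S, hS, hq, hSq⟩ := hq
    refine ⟨_, hR.add hS, fun u x => ?_, fun u ξ => ?_⟩
    · simp only [map_add, hp u x, hq u x, polyGradient_add, dotProduct_add, Matrix.add_mulVec]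
      ring
    · simp only [polyHessian_add, Matrix.add_mulVec, dotProduct_add, hRp, hSq]
      ring
  | mul_X p i hp =>
    obtain ⟨R, hR, hp, hRp⟩ := hp
    have hc : Continuous fun u => Matrix.vecMulVec (Pi.single i 1) (polyGradient p u) := by
      have := continuous_polyGradient p
      fun_prop
    refine ⟨_, (hR.smul (continuous_apply i)).add (.of_continuous hc), fun u x => ?_,
      fun u ξ => ?_⟩
    · simp only [map_mul, eval_X, hp u x, polyGradient_mul, polyGradient_X, dotProduct_add,
        dotProduct_smul, Matrix.add_mulVec, Matrix.smul_mulVec, dotProduct_vecMulVec_mulVec,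
        dotProduct_single, single_dotProduct, dotProduct_comm (polyGradient p u), smul_eq_mul,
        Pi.sub_apply]
      ring
    · simp only [polyHessian_mul, polyHessian_X, polyGradient_X, eval_X, smul_zero, zero_add,
        dotProduct_add, dotProduct_smul, Matrix.add_mulVec, Matrix.smul_mulVec, hRp,
        dotProduct_vecMulVec_mulVec, single_dotProduct, smul_eq_mul]
      ring

end Taylor

/-! ### Homogeneous polynomials and hyperbolic directions -/

section Homogeneous

variable {σ R A : Type*} [CommSemiring R] [CommSemiring A] [Algebra R A]
  {p : MvPolynomial σ R} {d : ℕ}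

theorem aeval_smul_of_isHomogeneous (hp : p.IsHomogeneous d) (c : A) (z : σ → A) :
    aeval (c • z) p = c ^ d * aeval z p := by
  rw [aeval_def, aeval_def, eval₂_eq, eval₂_eq, Finset.mul_sum]
  refine Finset.sum_congr rfl fun m hm => ?_
  have hd : ∑ i ∈ m.support, m i = d := (hp.degree_eq_sum_deg_support hm).symm
  simp only [Pi.smul_apply, smul_eq_mul, mul_pow, Finset.prod_mul_distrib,
    Finset.prod_pow_eq_pow_sum, hd]
  ring

theorem eval_smul_of_isHomogeneous (hp : p.IsHomogeneous d) (c : R) (x : σ → R) :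
    eval (c • x) p = c ^ d * eval x p :=
  aeval_smul_of_isHomogeneous hp c x

theorem eval_ne_zero_of_aeval_smul_ne_zero (hp : p.IsHomogeneous d) {c : A} {z : σ → A}
    (hz : aeval (c • z) p ≠ 0) : aeval z p ≠ 0 :=
  fun h0 => hz (by rw [aeval_smul_of_isHomogeneous hp, h0, mul_zero])

end Homogeneous

section LinePoly

variable {n d : ℕ} {h : MvPolynomial (Fin n) ℝ} {e : Fin n → ℝ}

theorem aeval_linePoly (a v : Fin n → ℝ) (z : ℂ) : Polynomial.aeval z (linePoly h a v) =
    aeval (Complex.ofReal ∘ a + z • (Complex.ofReal ∘ v)) h := by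
  rw [linePoly, MvPolynomial.comp_aeval_apply]
  exact congrArg (aeval · h) (funext fun i => by simp [mul_comm z])

theorem eval_linePoly (a v : Fin n → ℝ) (t : ℝ) :
    (linePoly h a v).eval t = eval (a + t • v) h := by
  rw [linePoly, ← Polynomial.coe_aeval_eq_eval, ← MvPolynomial.coe_aeval_eq_eval,
    MvPolynomial.comp_aeval_apply]
  exact congrArg (aeval · h) (funext fun i => by simp [mul_comm t])

theorem aeval_ofReal_comp (x : Fin n → ℝ) : aeval (Complex.ofReal ∘ x) h = (eval x h : ℂ) :=
  MvPolynomial.aeval_algebraMap_apply ℂ x h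

theorem continuous_aeval_complex : Continuous fun z : Fin n → ℂ => aeval z h := by
  simp only [aeval_def, eval₂_eq']
  fun_prop

theorem exists_polynomial_eval_eq_aeval_add_smul (h : MvPolynomial (Fin n) ℝ) (b a : Fin n → ℂ) :
    ∃ Q : Polynomial ℂ, ∀ r, Q.eval r = aeval (b + r • a) h := by
  refine ⟨aeval (fun i => Polynomial.C (b i) + Polynomial.X * Polynomial.C (a i)) h, fun r => ?_⟩
  rw [← Polynomial.coe_aeval_eq_eval,
    ← AlgHom.restrictScalars_apply ℝ (Polynomial.aeval r),
    MvPolynomial.comp_aeval_apply]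
  exact congrArg (aeval · h) (funext fun i => by simp [mul_comm r])

theorem im_eq_zero_of_aeval_add_smul_eq_zero (hhyp : IsHyperbolic h e) {a : Fin n → ℝ} {z : ℂ}
    (hz : aeval (Complex.ofReal ∘ a + z • (Complex.ofReal ∘ e)) h = 0) :
    z.im = 0 ∧ eval (a + z.re • e) h = 0 := by
  have him : z.im = 0 := by
    have := hhyp.2 a (-z) (by
      rw [aeval_linePoly, ← hz]
      congr 2
      ext i
      simp)
    simpa using this
  refine ⟨him, ?_⟩
  have hre : Complex.ofReal ∘ a + z • (Complex.ofReal ∘ e) = Complex.ofReal ∘ (a + z.re • e) := by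
    ext i
    simp [Complex.ext_iff, him]
  rwa [hre, aeval_ofReal_comp, Complex.ofReal_eq_zero] at hz

theorem isHyperbolic_iff_forall_aeval_ne_zero (hhom : h.IsHomogeneous d) : IsHyperbolic h e ↔
    ∀ x, aeval (Complex.ofReal ∘ x + Complex.I • (Complex.ofReal ∘ e)) h ≠ 0 := by
  refine ⟨fun hhyp x h0 => ?_, fun hx => ⟨fun h0 => ?_, fun a z hz => ?_⟩⟩
  · simpa using (im_eq_zero_of_aeval_add_smul_eq_zero hhyp h0).1
  · refine hx 0 ?_
    have := aeval_smul_of_isHomogeneous hhom Complex.I (Complex.ofReal ∘ e)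
    rw [aeval_ofReal_comp, h0, Complex.ofReal_zero, mul_zero] at this
    rw [← this]
    congr 2
    ext i
    simp
  · by_contra him
    rw [aeval_linePoly] at hz
    refine hx ((-z.im)⁻¹ • (a - z.re • e)) ?_
    have := aeval_smul_of_isHomogeneous hhom (-z.im : ℂ)⁻¹
      (Complex.ofReal ∘ a + z • (Complex.ofReal ∘ (-e)))
    rw [hz, mul_zero] at this
    rw [← this]
    congr 2
    ext i
    have : (z.im : ℂ) ≠ 0 := by exact_mod_cast him
    simp only [Pi.add_apply, Function.comp_apply, Pi.smul_apply, Pi.sub_apply, Pi.neg_apply,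
      smul_eq_mul]
    push_cast
    field_simp
    conv_rhs => rw [← Complex.re_add_im z]
    ring

theorem isHyperbolic_smul (hhom : h.IsHomogeneous d) (hhyp : IsHyperbolic h e) {c : ℝ}
    (hc : c ≠ 0) : IsHyperbolic h (c • e) := by
  rw [isHyperbolic_iff_forall_aeval_ne_zero hhom] at hhyp ⊢
  refine fun x => eval_ne_zero_of_aeval_smul_ne_zero hhom (c := (c : ℂ)⁻¹) ?_
  convert hhyp (c⁻¹ • x) using 3
  ext i
  have : (c : ℂ) ≠ 0 := by exact_mod_cast hc
  simp only [Pi.add_apply, Function.comp_apply, Pi.smul_apply, smul_eq_mul]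
  push_cast
  field_simp

theorem realRooted_linePoly (hhom : h.IsHomogeneous d) (hhyp : IsHyperbolic h e)
    (w : Fin n → ℝ) : RealRooted (linePoly h e w) := by
  intro z hz
  by_contra him
  have hz0 : z ≠ 0 := fun h0 => him (by simp [h0])
  rw [aeval_linePoly] at hz
  have h1 : aeval (Complex.ofReal ∘ w + z⁻¹ • (Complex.ofReal ∘ e)) h = 0 := by
    have := aeval_smul_of_isHomogeneous hhom z⁻¹ (Complex.ofReal ∘ e + z • (Complex.ofReal ∘ w))
    rwa [hz, mul_zero, smul_add, inv_smul_smul₀ hz0, add_comm] at this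
  have h2 := (im_eq_zero_of_aeval_add_smul_eq_zero hhyp h1).1
  rw [Complex.inv_im, div_eq_zero_iff] at h2
  simp_all

end LinePoly

/-! ### Gårding's theorem -/

theorem isOpen_setOf_forall_mem_ne_zero {X Y Z : Type*} [TopologicalSpace X] [TopologicalSpace Y]
    [TopologicalSpace Z] [T1Space Z] [Zero Z] {K : Set Y} (hK : IsCompact K) {G : X → Y → Z}
    (hG : Continuous fun p : X × Y => G p.1 p.2) : IsOpen {x | ∀ k ∈ K, G x k ≠ 0} :=
  isOpen_iff_mem_nhds.2 fun _ hx => hK.eventually_forall_of_forall_eventually fun k hk =>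
    (isOpen_compl_singleton.preimage hG).mem_nhds (hx k hk)

theorem norm_eval_re_le_norm_eval {p : Polynomial ℂ} (hp : ∀ r : ℂ, 0 ≤ r.im → p.eval r ≠ 0)
    {s : ℂ} (hs : 0 ≤ s.im) : ‖p.eval (s.re : ℂ)‖ ≤ ‖p.eval s‖ := by
  have hp0 : p ≠ 0 := by rintro rfl; exact hp 0 le_rfl (by simp)
  have hr : ∀ r ∈ p.roots, r.im < 0 := fun r hr =>
    not_le.1 fun hc => hp r hc ((Polynomial.mem_roots hp0).1 hr)
  simp only [(IsAlgClosed.splits p).eval_eq_prod_roots, norm_mul]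
  refine mul_le_mul_of_nonneg_left ?_ (norm_nonneg _)
  generalize p.roots = R at hr
  induction R using Multiset.induction_on with
  | empty => simp
  | cons r R ih =>
    simp only [Multiset.map_cons, Multiset.prod_cons, norm_mul]
    refine mul_le_mul ?_ (ih fun x hx => hr x (Multiset.mem_cons_of_mem hx)) (norm_nonneg _)
      (norm_nonneg _)
    have := hr r (Multiset.mem_cons_self r R)
    refine Real.sqrt_le_sqrt ?_
    simp only [Complex.normSq_apply, Complex.sub_re, Complex.sub_im, Complex.ofReal_re,
      Complex.ofReal_im]
    nlinarith

section Garding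

variable {n d : ℕ} {h : MvPolynomial (Fin n) ℝ} {e a b : Fin n → ℝ}

-- In the chart `r ↦ r⁻¹` at infinity the zeros stay away from `r⁻¹ = 0`, hence the closed upper
-- half plane can be treated as a compact set.
theorem isOpen_setOf_forall_im_nonneg_aeval_ne_zero {X : Type*} [TopologicalSpace X]
    (hhom : h.IsHomogeneous d) {c : X → Fin n → ℂ} (hc : Continuous c) {a : Fin n → ℂ}
    (ha : aeval a h ≠ 0) : IsOpen {s | ∀ r : ℂ, 0 ≤ r.im → aeval (c s + r • a) h ≠ 0} := by
  have hh := continuous_aeval_complex (h := h)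
  have hcpt {P : Set ℂ} (hP : IsClosed P) : IsCompact (Metric.closedBall (0 : ℂ) 1 ∩ P) :=
    (isCompact_closedBall _ _).inter_right hP
  have hnear := isOpen_setOf_forall_mem_ne_zero (G := fun s (r : ℂ) => aeval (c s + r • a) h)
    (hcpt (isClosed_le continuous_const Complex.continuous_im : IsClosed {r : ℂ | 0 ≤ r.im}))
    (hh.comp (by fun_prop))
  have hfar := isOpen_setOf_forall_mem_ne_zero (G := fun s (ρ : ℂ) => aeval (ρ • c s + a) h)
    (hcpt (isClosed_le Complex.continuous_im continuous_const : IsClosed {ρ : ℂ | ρ.im ≤ 0}))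
    (hh.comp (by fun_prop))
  have hinv {s} {r : ℂ} (hr : r ≠ 0) :
      aeval (r⁻¹ • c s + a) h = r⁻¹ ^ d * aeval (c s + r • a) h := by
    rw [← aeval_smul_of_isHomogeneous hhom, smul_add, inv_smul_smul₀ hr]
  have him (r : ℂ) : (r⁻¹).im ≤ 0 ↔ 0 ≤ r.im := by
    rcases eq_or_ne r 0 with rfl | hr
    · simp
    · rw [Complex.inv_im, div_le_iff₀ (Complex.normSq_pos.2 hr), zero_mul, neg_nonpos]
  convert hnear.inter hfar using 1
  ext s
  refine ⟨fun hs => ⟨fun r hr => hs r hr.2, fun ρ hρ => ?_⟩, fun hs r hr h0 => ?_⟩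
  · rcases eq_or_ne ρ 0 with rfl | hρ0
    · simpa using ha
    · have := hinv (s := s) (inv_ne_zero hρ0)
      rw [inv_inv] at this
      rw [this]
      exact mul_ne_zero (pow_ne_zero _ hρ0) (hs _ ((him _).1 (by simpa using hρ.2)))
  · rcases le_total ‖r‖ 1 with hr1 | hr1
    · exact hs.1 r ⟨by simpa using hr1, hr⟩ h0
    · have hr0 : r ≠ 0 := norm_pos_iff.1 (one_pos.trans_le hr1)
      exact hs.2 r⁻¹ ⟨by simpa using inv_le_one_of_one_le₀ hr1, (him r).2 hr⟩
        (by rw [hinv hr0, h0, mul_zero])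

theorem isClosed_setOf_forall_im_nonneg_aeval_ne_zero {X : Type*} [TopologicalSpace X]
    {c : X → Fin n → ℂ} (hc : Continuous c) {a : Fin n → ℂ}
    (hreal : ∀ s (r : ℝ), aeval (c s + (r : ℂ) • a) h ≠ 0) :
    IsClosed {s | ∀ r : ℂ, 0 ≤ r.im → aeval (c s + r • a) h ≠ 0} := by
  have hh := continuous_aeval_complex (h := h)
  refine closure_subset_iff_isClosed.1 fun s hs r hr h0 => hreal s r.re ?_
  have hle : IsClosed {s | ‖aeval (c s + (r.re : ℂ) • a) h‖ ≤ ‖aeval (c s + r • a) h‖} :=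
    isClosed_le (hh.comp (by fun_prop)).norm (hh.comp (by fun_prop)).norm
  have hs' := closure_minimal (fun s hs => ?_) hle hs
  · rwa [Set.mem_ofPred_eq, h0, norm_zero, norm_le_zero_iff] at hs'
  · obtain ⟨Q, hQ⟩ := exists_polynomial_eval_eq_aeval_add_smul h (c s) a
    simp only [Set.mem_ofPred_eq, ← hQ] at hs ⊢
    exact norm_eval_re_le_norm_eval hs hr

theorem aeval_add_smul_ne_zero_of_preconnectedSpace {X : Type*} [TopologicalSpace X]
    [PreconnectedSpace X] (hhom : h.IsHomogeneous d) {c : X → Fin n → ℂ} (hc : Continuous c)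
    {a : Fin n → ℂ} (ha : aeval a h ≠ 0)
    (hreal : ∀ s (r : ℝ), aeval (c s + (r : ℂ) • a) h ≠ 0) {s₀ : X}
    (h₀ : ∀ r : ℂ, 0 ≤ r.im → aeval (c s₀ + r • a) h ≠ 0) (s : X) {r : ℂ} (hr : 0 ≤ r.im) :
    aeval (c s + r • a) h ≠ 0 :=
  Set.eq_univ_iff_forall.1 (IsClopen.eq_univ
    ⟨isClosed_setOf_forall_im_nonneg_aeval_ne_zero hc hreal,
      isOpen_setOf_forall_im_nonneg_aeval_ne_zero hhom hc ha⟩ ⟨s₀, h₀⟩) s r hr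

theorem aeval_I_smul_add_smul_ne_zero (hhom : h.IsHomogeneous d) (hhyp : IsHyperbolic h e)
    (ha : ∀ t : ℝ, 0 ≤ t → eval (a + t • e) h ≠ 0) {r : ℂ} (hr : 0 ≤ r.im) :
    aeval (Complex.I • (Complex.ofReal ∘ e) + r • (Complex.ofReal ∘ a)) h ≠ 0 := by
  rcases eq_or_ne r 0 with rfl | hr0
  · convert (isHyperbolic_iff_forall_aeval_ne_zero hhom).1 hhyp 0 using 3
    ext i
    simp
  refine eval_ne_zero_of_aeval_smul_ne_zero hhom (c := r⁻¹) fun h0 => ?_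
  rw [smul_add, inv_smul_smul₀ hr0, smul_smul, add_comm] at h0
  obtain ⟨-, h1⟩ := im_eq_zero_of_aeval_add_smul_eq_zero hhyp h0
  refine ha _ ?_ h1
  simpa [Complex.inv_im, neg_div] using div_nonneg hr (Complex.normSq_nonneg r)

theorem isHyperbolic_add_add (hhom : h.IsHomogeneous d)
    (ha : ∀ s : ℝ, IsHyperbolic h (e + s ^ 2 • a))
    (hb : ∀ t : ℝ, 0 ≤ t → eval (b + t • e) h ≠ 0) : IsHyperbolic h (e + a + b) := by
  refine (isHyperbolic_iff_forall_aeval_ne_zero hhom).2 fun x => ?_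
  have hc : Continuous fun s : ℝ => (s : ℂ) • (Complex.ofReal ∘ x) +
      Complex.I • (Complex.ofReal ∘ (e + s ^ 2 • a)) := by
    fun_prop
  have key := aeval_add_smul_ne_zero_of_preconnectedSpace hhom hc (a := Complex.ofReal ∘ b)
    (s₀ := 0) ?_ (fun s r => ?_) (fun r hr => ?_) 1 (r := Complex.I) (by simp)
  · convert key using 3
    ext i
    simp only [Pi.add_apply, Function.comp_apply, Pi.smul_apply, smul_eq_mul]
    push_cast
    ring
  · rw [aeval_ofReal_comp]
    simpa using hb 0 le_rfl
  · convert (isHyperbolic_iff_forall_aeval_ne_zero hhom).1 (ha s) (s • x + r • b) using 3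
    ext i
    simp only [Pi.add_apply, Function.comp_apply, Pi.smul_apply, smul_eq_mul]
    push_cast
    ring
  · have he : IsHyperbolic h e := by simpa using ha 0
    simpa using aeval_I_smul_add_smul_ne_zero hhom he hb hr

theorem mem_hypCone_iff (hhyp : IsHyperbolic h e) :
    a ∈ hypCone h e ↔ ∀ t : ℝ, 0 < t → eval (a + t • e) h ≠ 0 := by
  have hconv (z : ℂ) : Polynomial.aeval z (linePoly h a (-e)) =
      aeval (Complex.ofReal ∘ a + (-z) • (Complex.ofReal ∘ e)) h := by
    rw [aeval_linePoly]
    congr 2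
    ext i
    simp
  refine ⟨fun ha t ht h0 => ?_, fun ha z hz => ?_⟩
  · have := (ha (-t : ℝ) (by
      rw [hconv, ← Complex.ofReal_zero, ← h0, ← aeval_ofReal_comp]
      congr 2
      ext i
      simp)).2
    rw [Complex.ofReal_re] at this
    linarith
  · rw [hconv] at hz
    obtain ⟨him, h0⟩ := im_eq_zero_of_aeval_add_smul_eq_zero hhyp hz
    refine ⟨by simpa using him, not_lt.1 fun hre => ha _ ?_ h0⟩
    simpa using hre

theorem eval_add_smul_ne_zero_of_mem_hypCone (hhom : h.IsHomogeneous d) (hhyp : IsHyperbolic h e)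
    (ha : a ∈ hypCone h e) {s t : ℝ} (hs : 0 ≤ s) (ht : 0 < t) : eval (s • a + t • e) h ≠ 0 := by
  rcases hs.eq_or_lt with rfl | hs
  · rw [zero_smul, zero_add, eval_smul_of_isHomogeneous hhom]
    exact mul_ne_zero (pow_ne_zero _ ht.ne') hhyp.1
  · refine eval_ne_zero_of_aeval_smul_ne_zero hhom (c := s⁻¹) ?_
    rw [smul_add, inv_smul_smul₀ hs.ne', smul_smul]
    exact (mem_hypCone_iff hhyp).1 ha _ (by positivity)

theorem isHyperbolic_smul_add_smul (hhom : h.IsHomogeneous d) (hhyp : IsHyperbolic h e)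
    (ha : a ∈ hypCone h e) {s t : ℝ} (hs : 0 ≤ s) (ht : 0 < t) :
    IsHyperbolic h (s • a + t • e) := by
  have hpos : ∀ r : ℝ, 0 ≤ r → eval ((2 / t * s) • a + e + r • e) h ≠ 0 := fun r hr => by
    convert eval_add_smul_ne_zero_of_mem_hypCone hhom hhyp ha (by positivity : 0 ≤ 2 / t * s)
      (by positivity : 0 < 1 + r) using 3
    module
  convert isHyperbolic_smul hhom (isHyperbolic_add_add hhom (a := 0) (by simpa using hhyp) hpos)
    (by positivity : t / 2 ≠ 0) using 1
  match_scalars <;> field_simp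
  norm_num

theorem isHyperbolic_add_add_smul (hhom : h.IsHomogeneous d) (hhyp : IsHyperbolic h e)
    (ha : a ∈ hypCone h e) (hb : b ∈ hypCone h e) {t : ℝ} (ht : 0 < t) :
    IsHyperbolic h (a + b + t • e) := by
  have hstep (s : ℝ) : IsHyperbolic h (e + s ^ 2 • (2 / t) • a) := by
    convert isHyperbolic_smul_add_smul hhom hhyp ha (by positivity : 0 ≤ s ^ 2 * (2 / t)) one_pos
      using 1
    module
  have hpos : ∀ r : ℝ, 0 ≤ r → eval ((2 / t) • b + e + r • e) h ≠ 0 := fun r hr => by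
    convert eval_add_smul_ne_zero_of_mem_hypCone hhom hhyp hb (by positivity : 0 ≤ 2 / t)
      (by positivity : 0 < 1 + r) using 3
    module
  convert isHyperbolic_smul hhom (isHyperbolic_add_add hhom hstep hpos)
    (by positivity : t / 2 ≠ 0) using 1
  match_scalars <;> field_simp
  norm_num

theorem hypCone_add_mem (hhom : h.IsHomogeneous d) (hhyp : IsHyperbolic h e)
    (ha : a ∈ hypCone h e) (hb : b ∈ hypCone h e) : a + b ∈ hypCone h e :=
  (mem_hypCone_iff hhyp).2 fun _ ht => (isHyperbolic_add_add_smul hhom hhyp ha hb ht).1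

theorem hypCone_smul_mem (hhom : h.IsHomogeneous d) (hhyp : IsHyperbolic h e)
    (ha : a ∈ hypCone h e) {c : ℝ} (hc : 0 ≤ c) : c • a ∈ hypCone h e :=
  (mem_hypCone_iff hhyp).2 fun _ ht => eval_add_smul_ne_zero_of_mem_hypCone hhom hhyp ha hc ht

theorem self_mem_hypCone (hhom : h.IsHomogeneous d) (hhyp : IsHyperbolic h e) :
    e ∈ hypCone h e := by
  refine (mem_hypCone_iff hhyp).2 fun t ht => ?_
  rw [show e + t • e = (1 + t) • e by module, eval_smul_of_isHomogeneous hhom]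
  exact mul_ne_zero (by positivity) hhyp.1

theorem zero_mem_hypCone (hhom : h.IsHomogeneous d) (hhyp : IsHyperbolic h e) :
    0 ∈ hypCone h e := by
  simpa using hypCone_smul_mem hhom hhyp (self_mem_hypCone hhom hhyp) le_rfl

theorem isOpen_setOf_forall_le_eval_add_smul_ne_zero (hhom : h.IsHomogeneous d)
    (he : eval e h ≠ 0) {τ : ℝ} (hτ : 0 < τ) :
    IsOpen {x : Fin n → ℝ | ∀ t : ℝ, τ ≤ t → eval (x + t • e) h ≠ 0} := by
  have hinv {x : Fin n → ℝ} {t : ℝ} (ht : t ≠ 0) :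
      eval (x + t • e) h = t ^ d * eval (t⁻¹ • x + e) h := by
    rw [← eval_smul_of_isHomogeneous hhom, smul_add, smul_inv_smul₀ ht]
  convert isOpen_setOf_forall_mem_ne_zero (K := Set.Icc 0 τ⁻¹)
    (G := fun (x : Fin n → ℝ) (s : ℝ) => eval (s • x + e) h) isCompact_Icc
    ((continuous_eval h).comp (by fun_prop)) using 1
  ext x
  refine ⟨fun hx s hs => ?_, fun hx t ht => ?_⟩
  · rcases hs.1.eq_or_lt with rfl | hpos
    · simpa using he
    have := hx s⁻¹ ((le_inv_comm₀ hτ hpos).2 hs.2)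
    rw [hinv (inv_ne_zero hpos.ne'), inv_inv] at this
    exact right_ne_zero_of_mul this
  · have htp := hτ.trans_le ht
    rw [hinv htp.ne']
    exact mul_ne_zero (pow_ne_zero _ htp.ne') (hx _ ⟨(inv_pos.2 htp).le, inv_anti₀ hτ ht⟩)

theorem hypCone_mem_nhds (hhom : h.IsHomogeneous d) (hhyp : IsHyperbolic h e)
    (ha : a ∈ hypCone h e) (h0 : eval a h ≠ 0) : hypCone h e ∈ nhds a := by
  rw [mem_hypCone_iff hhyp] at ha
  have hsmall := isOpen_setOf_forall_mem_ne_zero (K := Set.Icc 0 1)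
    (G := fun (x : Fin n → ℝ) (s : ℝ) => eval (x + s • e) h) isCompact_Icc
    ((continuous_eval h).comp (by fun_prop))
  have hlarge := isOpen_setOf_forall_le_eval_add_smul_ne_zero hhom hhyp.1 one_pos
  have ha' : ∀ s ∈ Set.Icc (0 : ℝ) 1, eval (a + s • e) h ≠ 0 := fun s hs => by
    rcases hs.1.eq_or_lt with rfl | hpos
    exacts [by simpa using h0, ha s hpos]
  filter_upwards [hsmall.mem_nhds ha', hlarge.mem_nhds fun t ht => ha t (one_pos.trans_le ht)]
    with x hx hx'
  refine (mem_hypCone_iff hhyp).2 fun t ht => ?_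
  rcases le_total t 1 with h1 | h1
  exacts [hx t ⟨ht.le, h1⟩, hx' t h1]

theorem isClosed_hypCone (hhom : h.IsHomogeneous d) (hhyp : IsHyperbolic h e) :
    IsClosed (hypCone h e) := by
  refine closure_subset_iff_isClosed.1 fun a ha => (mem_hypCone_iff hhyp).2 fun t ht => ?_
  have hev : ∀ᶠ x in nhds a, e + (2 / t) • (a - x) ∈ hypCone h e := by
    have : Continuous fun x => e + (2 / t) • (a - x) := by fun_prop
    refine this.continuousAt.eventually_mem ?_
    simpa using hypCone_mem_nhds hhom hhyp (self_mem_hypCone hhom hhyp) hhyp.1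
  obtain ⟨b, hb, hab⟩ := ((mem_closure_iff_frequently.1 ha).and_eventually hev).exists
  have := (isHyperbolic_add_add_smul hhom hhyp hb
    (hypCone_smul_mem hhom hhyp hab (half_pos ht).le) (half_pos ht)).1
  convert this using 3
  match_scalars <;> field_simp <;> norm_num

theorem mem_frontier_hypCone (hhyp : IsHyperbolic h e) (ha : a ∈ hypCone h e)
    (h0 : eval a h = 0) : a ∈ frontier (hypCone h e) := by
  refine ⟨subset_closure ha, fun hi => ?_⟩
  have hc : Filter.Tendsto (fun s : ℝ => a - s • e) (nhdsWithin 0 (Set.Ioi 0)) (nhds a) := by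
    have : Continuous fun s : ℝ => a - s • e := by fun_prop
    simpa using (this.tendsto 0).mono_left nhdsWithin_le_nhds
  obtain ⟨s, hs, hs0⟩ :=
    ((hc.eventually (mem_interior_iff_mem_nhds.1 hi)).and self_mem_nhdsWithin).exists
  exact (mem_hypCone_iff hhyp).1 hs s hs0 (by simpa using h0)

theorem eval_add_smul_pos_of_mem_hypCone (hhom : h.IsHomogeneous d) (hhyp : IsHyperbolic h e)
    (hpos : 0 < eval e h) (ha : a ∈ hypCone h e) {t : ℝ} (ht : 0 < t) :
    0 < eval (a + t • e) h := by
  by_contra! hneg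
  have hc : Continuous fun s : ℝ => eval (s • a + ((1 - s) + s * t) • e) h :=
    (continuous_eval h).comp (by fun_prop)
  obtain ⟨s, hs, h0⟩ := intermediate_value_Icc' zero_le_one hc.continuousOn
    (show (0 : ℝ) ∈ Set.Icc _ _ from ⟨by simpa using hneg, by simpa using hpos.le⟩)
  refine eval_add_smul_ne_zero_of_mem_hypCone hhom hhyp ha hs.1 ?_ h0
  rcases hs.2.eq_or_lt with rfl | hs1
  · simpa using ht
  · exact add_pos_of_pos_of_nonneg (sub_pos.2 hs1) (mul_nonneg hs.1 ht.le)

theorem eval_nonneg_of_mem_hypCone (hhom : h.IsHomogeneous d) (hhyp : IsHyperbolic h e)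
    (hpos : 0 < eval e h) (ha : a ∈ hypCone h e) : 0 ≤ eval a h := by
  have hc : Continuous fun s : ℝ => eval (a + s • e) h := (continuous_eval h).comp (by fun_prop)
  have hlim : Filter.Tendsto (fun s : ℝ => eval (a + s • e) h) (nhdsWithin 0 (Set.Ioi 0))
      (nhds (eval a h)) := by
    simpa using (hc.tendsto 0).mono_left nhdsWithin_le_nhds
  refine ge_of_tendsto hlim ?_
  filter_upwards [self_mem_nhdsWithin] with s hs
  exact (eval_add_smul_pos_of_mem_hypCone hhom hhyp hpos ha hs).le

end Garding

/-! ### Real-rooted polynomials -/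

section RealRooted

variable {p : Polynomial ℝ}

/-- The product `∏ (1 - t X)` over `t ∈ T`, whose reciprocal roots are the elements of `T`. -/
noncomputable def reciprocalRootsPoly (T : Multiset ℝ) : Polynomial ℝ :=
  (T.map fun t => 1 - Polynomial.C t * Polynomial.X).prod

theorem reciprocalRootsPoly_cons (t : ℝ) (T : Multiset ℝ) :
    reciprocalRootsPoly (t ::ₘ T) =
      (1 - Polynomial.C t * Polynomial.X) * reciprocalRootsPoly T := by
  simp [reciprocalRootsPoly]

theorem RealRooted.splits (hp : RealRooted p) : p.Splits := by
  refine Polynomial.Splits.of_splits_map (algebraMap ℝ ℂ) (IsAlgClosed.splits _) fun z hz => ?_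
  refine ⟨z.re, Complex.ext rfl ?_⟩
  have hroot := Polynomial.isRoot_of_mem_roots hz
  rw [Polynomial.IsRoot, Polynomial.eval_map_algebraMap] at hroot
  simp [hp z hroot]

theorem RealRooted.exists_eq_C_mul_reciprocalRootsPoly (hp : RealRooted p)
    (h0 : p.coeff 0 ≠ 0) :
    ∃ T, p = Polynomial.C (p.coeff 0) * reciprocalRootsPoly T := by
  have hfactor : p.roots.map (fun r => Polynomial.X - Polynomial.C r) =
      p.roots.map fun r => Polynomial.C (-r) * (1 - Polynomial.C r⁻¹ * Polynomial.X) := by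
    refine Multiset.map_congr rfl fun r hr => ?_
    have hr0 : r ≠ 0 := by
      rintro rfl
      exact h0 (by simpa [Polynomial.coeff_zero_eq_eval_zero] using
        Polynomial.isRoot_of_mem_roots hr)
    rw [mul_sub, ← mul_assoc, ← Polynomial.C_mul, neg_mul, mul_inv_cancel₀ hr0]
    simp only [Polynomial.C_neg, Polynomial.C_1]
    ring
  obtain ⟨c, hc⟩ :
      ∃ c, p = Polynomial.C c * reciprocalRootsPoly (p.roots.map (·⁻¹)) := by
    refine ⟨p.leadingCoeff * (p.roots.map (-·)).prod, ?_⟩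
    conv_lhs => rw [hp.splits.eq_prod_roots, hfactor, Multiset.prod_map_mul]
    simp only [reciprocalRootsPoly, map_multiset_prod, Multiset.map_map, Polynomial.C_mul,
      mul_assoc, Function.comp_def]
  have hcoeff : p.coeff 0 = c := by
    rw [hc, Polynomial.coeff_zero_eq_eval_zero]
    simp [reciprocalRootsPoly, Polynomial.eval_multiset_prod]
  exact ⟨_, hcoeff ▸ hc⟩

theorem coeff_reciprocalRootsPoly (T : Multiset ℝ) :
    (reciprocalRootsPoly T).coeff 0 = 1 ∧ (reciprocalRootsPoly T).coeff 1 = -T.sum ∧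
      (reciprocalRootsPoly T).coeff 1 ^ 2 - 2 * (reciprocalRootsPoly T).coeff 2 =
        (T.map (· ^ 2)).sum := by
  induction T using Multiset.induction with
  | empty => simp [reciprocalRootsPoly, Polynomial.coeff_one]
  | cons t T ih =>
    obtain ⟨h0, h1, h2⟩ := ih
    have hsucc (k : ℕ) : (reciprocalRootsPoly (t ::ₘ T)).coeff (k + 1) =
        (reciprocalRootsPoly T).coeff (k + 1) - t * (reciprocalRootsPoly T).coeff k := by
      simp [reciprocalRootsPoly_cons, sub_mul, mul_assoc, Polynomial.coeff_X_mul]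
    refine ⟨by simp [reciprocalRootsPoly_cons, h0], ?_, ?_⟩
    · rw [hsucc, h0, h1, Multiset.sum_cons]
      ring
    · rw [hsucc, hsucc, h0, Multiset.map_cons, Multiset.sum_cons, ← h2]
      ring

theorem eval_reciprocalRootsPoly_sq_le (T : Multiset ℝ) (s : ℝ) :
    (reciprocalRootsPoly T).eval s ^ 2 ≤
      Real.exp (2 * s * -T.sum + s ^ 2 * (T.map (· ^ 2)).sum) := by
  induction T using Multiset.induction with
  | empty => simp [reciprocalRootsPoly]
  | cons t T ih =>
    have hfactor : (1 - t * s) ^ 2 ≤ Real.exp (2 * s * -t + s ^ 2 * t ^ 2) := by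
      linarith [Real.add_one_le_exp (2 * s * -t + s ^ 2 * t ^ 2)]
    calc (reciprocalRootsPoly (t ::ₘ T)).eval s ^ 2
        = (1 - t * s) ^ 2 * (reciprocalRootsPoly T).eval s ^ 2 := by
          simp [reciprocalRootsPoly_cons, mul_pow]
      _ ≤ _ := mul_le_mul hfactor ih (sq_nonneg _) (Real.exp_nonneg _)
      _ = _ := by
          rw [← Real.exp_add, Multiset.map_cons, Multiset.sum_cons, Multiset.sum_cons]
          ring_nf

theorem eval_reciprocalRootsPoly_ne_zero {T : Multiset ℝ} {s : ℝ}
    (hs : s ^ 2 * (T.map (· ^ 2)).sum < 1) : (reciprocalRootsPoly T).eval s ≠ 0 := by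
  rw [reciprocalRootsPoly, Polynomial.eval_multiset_prod, Multiset.map_map, Ne,
    Multiset.prod_eq_zero_iff, Multiset.mem_map]
  rintro ⟨t, ht, h0⟩
  have hle : t ^ 2 ≤ (T.map (· ^ 2)).sum :=
    Multiset.single_le_sum (by simpa using fun x _ => sq_nonneg x) _
      (Multiset.mem_map_of_mem _ ht)
  have hts : 1 - t * s = 0 := by simpa using h0
  nlinarith [mul_le_mul_of_nonneg_left hle (sq_nonneg s)]

/-- The sum of the squares of the reciprocal roots of `p`, expressed through the coefficients of
`p` by Newton's identities. -/
noncomputable def sumSqReciprocalRoots (p : Polynomial ℝ) : ℝ :=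
  (p.coeff 1 / p.coeff 0) ^ 2 - 2 * (p.coeff 2 / p.coeff 0)

theorem RealRooted.eval_bounds (hp : RealRooted p) (h0 : p.coeff 0 ≠ 0) (s : ℝ) :
    p.eval s ^ 2 ≤ p.coeff 0 ^ 2 *
      Real.exp (2 * s * (p.coeff 1 / p.coeff 0) + s ^ 2 * sumSqReciprocalRoots p) ∧
    (s ^ 2 * sumSqReciprocalRoots p < 1 → p.eval s ≠ 0) := by
  obtain ⟨T, hT⟩ := hp.exists_eq_C_mul_reciprocalRootsPoly h0
  obtain ⟨-, hsum, hsumSq⟩ := coeff_reciprocalRootsPoly T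
  have hcoeff (k : ℕ) : p.coeff k / p.coeff 0 = (reciprocalRootsPoly T).coeff k := by
    rw [div_eq_iff h0, mul_comm, ← Polynomial.coeff_C_mul, ← hT]
  have heval : p.eval s = p.coeff 0 * (reciprocalRootsPoly T).eval s := by
    conv_lhs => rw [hT, Polynomial.eval_mul, Polynomial.eval_C]
  rw [sumSqReciprocalRoots, hcoeff, hcoeff, hsumSq, hsum, heval, mul_pow]
  refine ⟨?_, fun hs => mul_ne_zero h0 (eval_reciprocalRootsPoly_ne_zero hs)⟩
  exact mul_le_mul_of_nonneg_left (eval_reciprocalRootsPoly_sq_le T s) (sq_nonneg (p.coeff 0))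

end RealRooted

section LinePolyCoeff

variable {n : ℕ} (h : MvPolynomial (Fin n) ℝ) (a v : Fin n → ℝ)

theorem coeff_zero_linePoly : (linePoly h a v).coeff 0 = eval a h := by
  rw [Polynomial.coeff_zero_eq_eval_zero, eval_linePoly, zero_smul, add_zero]

theorem eval_derivative_linePoly (t : ℝ) :
    (linePoly h a v).derivative.eval t = v ⬝ᵥ polyGradient h (a + t • v) := by
  refine ((linePoly h a v).hasDerivAt t).unique ?_
  simpa only [eval_linePoly] using hasDerivAt_eval_add_smul h a v t

theorem coeff_one_linePoly : (linePoly h a v).coeff 1 = v ⬝ᵥ polyGradient h a := by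
  have := eval_derivative_linePoly h a v 0
  rw [← Polynomial.coeff_zero_eq_eval_zero, Polynomial.coeff_derivative] at this
  simpa using this

theorem two_mul_coeff_two_linePoly :
    2 * (linePoly h a v).coeff 2 = v ⬝ᵥ (polyHessian h a).mulVec v := by
  have hsecond := ((linePoly h a v).derivative.hasDerivAt 0).unique (by
    simpa only [eval_derivative_linePoly] using hasDerivAt_dotProduct_polyGradient h a v v 0)
  rw [← Polynomial.coeff_zero_eq_eval_zero, Polynomial.coeff_derivative,
    Polynomial.coeff_derivative] at hsecond
  norm_num at hsecond
  linarith

end LinePolyCoeff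

/-! ### Second-order behaviour at the boundary -/

section FlatDirections

variable {n d : ℕ} {h : MvPolynomial (Fin n) ℝ} {e v ξ : Fin n → ℝ}

theorem differentiableAt_dotProduct_polyHessian_mulVec (a w : Fin n → ℝ) (t : ℝ) :
    DifferentiableAt ℝ (fun t : ℝ => ξ ⬝ᵥ (polyHessian h (a + t • w)).mulVec ξ) t := by
  unfold dotProduct Matrix.mulVec dotProduct
  exact .fun_sum fun i _ => .const_mul (.fun_sum fun j _ => .mul_const
    (hasDerivAt_eval_add_smul (pderiv j (pderiv i h)) a w t).differentiableAt _) _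

theorem exists_eventually_reciprocalRoots_le (hpos : ∀ ε : ℝ, 0 < ε → 0 < eval (v + ε • e) h)
    (h0 : eval v h = 0) (he : 0 < e ⬝ᵥ polyGradient h v) (h1 : ξ ⬝ᵥ polyGradient h v = 0)
    (h2 : 0 ≤ ξ ⬝ᵥ (polyHessian h v).mulVec ξ) :
    ∃ M, ∀ᶠ ε : ℝ in nhdsWithin 0 (Set.Ioi 0),
      |(linePoly h (v + ε • e) ξ).coeff 1 / (linePoly h (v + ε • e) ξ).coeff 0| ≤ M ∧
      sumSqReciprocalRoots (linePoly h (v + ε • e) ξ) ≤ M := by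
  have lim0 := (hasDerivAt_eval_add_smul h v e 0).tendsto_slope_zero_right
  have lim1 := (hasDerivAt_dotProduct_polyGradient h v ξ e 0).tendsto_slope_zero_right
  have lim2 := (differentiableAt_dotProduct_polyHessian_mulVec (h := h) (ξ := ξ) v e
    0).hasDerivAt.tendsto_slope_zero_right
  simp only [zero_add, zero_smul, add_zero, h0, h1, sub_zero, smul_eq_mul] at lim0 lim1 lim2
  have limQuot := lim1.div lim0 he.ne'
  have limSq := (limQuot.pow 2).sub (lim2.div lim0 he.ne')
  obtain ⟨M₁, hM₁⟩ := limQuot.abs.isBoundedUnder_le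
  obtain ⟨M₂, hM₂⟩ := limSq.isBoundedUnder_le
  refine ⟨max M₁ M₂, ?_⟩
  filter_upwards [Filter.eventually_map.1 hM₁, Filter.eventually_map.1 hM₂,
    self_mem_nhdsWithin] with ε hε₁ hε₂ hε
  have hεpos : 0 < ε := hε
  have hcancel (x : ℝ) : ε⁻¹ * x / (ε⁻¹ * eval (v + ε • e) h) = x / eval (v + ε • e) h :=
    mul_div_mul_left _ _ (inv_ne_zero hεpos.ne')
  simp only [Pi.div_apply, hcancel, sub_div] at hε₁ hε₂
  rw [sumSqReciprocalRoots, ← mul_div_assoc, two_mul_coeff_two_linePoly, coeff_one_linePoly,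
    coeff_zero_linePoly]
  have hnonneg : 0 ≤ ξ ⬝ᵥ (polyHessian h v).mulVec ξ / eval (v + ε • e) h :=
    div_nonneg h2 (hpos ε hεpos).le
  exact ⟨hε₁.trans (le_max_left _ _), le_max_of_le_right (by linarith)⟩

/-- A direction `ξ` is *flat* for `h` at `v` if `h` vanishes at `v`, and along `ξ` its first
derivative at `v` is zero while its second derivative is nonnegative. -/
structure IsFlatDirection (h : MvPolynomial (Fin n) ℝ) (v ξ : Fin n → ℝ) : Prop where
  eval_eq_zero : eval v h = 0
  dotProduct_polyGradient_eq_zero : ξ ⬝ᵥ polyGradient h v = 0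
  dotProduct_polyHessian_nonneg : 0 ≤ ξ ⬝ᵥ (polyHessian h v).mulVec ξ

/- Along a flat direction the reciprocal roots of `s ↦ h (v + ε e + s ξ)` stay bounded as `ε → 0`,
while its value at `s = 0` tends to zero. -/
theorem IsFlatDirection.exists_eventually_bounds (hξ : IsFlatDirection h v ξ)
    (hhom : h.IsHomogeneous d) (hhyp : IsHyperbolic h e) (hpos : 0 < eval e h)
    (hv : v ∈ hypCone h e) (he : 0 < e ⬝ᵥ polyGradient h v) :
    ∃ M, ∀ᶠ ε : ℝ in nhdsWithin 0 (Set.Ioi 0), ∀ s : ℝ,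
      eval (v + ε • e + s • ξ) h ^ 2 ≤
        eval (v + ε • e) h ^ 2 * Real.exp (2 * |s| * M + s ^ 2 * M) ∧
      (s ^ 2 * M < 1 → eval (v + ε • e + s • ξ) h ≠ 0) := by
  have hposε : ∀ ε : ℝ, 0 < ε → 0 < eval (v + ε • e) h := fun ε hε =>
    eval_add_smul_pos_of_mem_hypCone hhom hhyp hpos hv hε
  obtain ⟨M, hM⟩ := exists_eventually_reciprocalRoots_le hposε hξ.eval_eq_zero he
    hξ.dotProduct_polyGradient_eq_zero hξ.dotProduct_polyHessian_nonneg
  refine ⟨M, ?_⟩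
  filter_upwards [hM, self_mem_nhdsWithin] with ε ⟨hM₁, hM₂⟩ hε s
  have hreal : RealRooted (linePoly h (v + ε • e) ξ) := by
    simpa using realRooted_linePoly hhom
      (isHyperbolic_smul_add_smul hhom hhyp hv zero_le_one hε) ξ
  have hbounds := hreal.eval_bounds (by simpa [coeff_zero_linePoly] using (hposε ε hε).ne') s
  have hlin : 2 * s * ((linePoly h (v + ε • e) ξ).coeff 1 /
      (linePoly h (v + ε • e) ξ).coeff 0) ≤ 2 * |s| * M := by
    refine (le_abs_self _).trans ?_
    rw [abs_mul, abs_mul, abs_two]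
    gcongr
  have hsq := mul_le_mul_of_nonneg_left hM₂ (sq_nonneg s)
  rw [eval_linePoly] at hbounds
  refine ⟨(hbounds.1.trans (mul_le_mul_of_nonneg_left
    (Real.exp_le_exp.2 (add_le_add hlin hsq)) (sq_nonneg _))).trans_eq ?_,
    fun hs => hbounds.2 (hsq.trans_lt hs)⟩
  rw [coeff_zero_linePoly]

theorem IsFlatDirection.eval_add_smul_eq_zero (hξ : IsFlatDirection h v ξ)
    (hhom : h.IsHomogeneous d) (hhyp : IsHyperbolic h e) (hpos : 0 < eval e h)
    (hv : v ∈ hypCone h e) (he : 0 < e ⬝ᵥ polyGradient h v) (s : ℝ) :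
    eval (v + s • ξ) h = 0 := by
  obtain ⟨M, hM⟩ := hξ.exists_eventually_bounds hhom hhyp hpos hv he
  have hlim (w : Fin n → ℝ) : Filter.Tendsto (fun ε : ℝ => eval (v + ε • e + w) h ^ 2)
      (nhdsWithin 0 (Set.Ioi 0)) (nhds (eval (v + w) h ^ 2)) := by
    have hcont : Continuous fun ε : ℝ => eval (v + ε • e + w) h ^ 2 :=
      ((continuous_eval h).comp' (by fun_prop)).pow 2
    simpa using (hcont.tendsto 0).mono_left nhdsWithin_le_nhds
  have hlim0 := (hlim 0).mul_const (Real.exp (2 * |s| * M + s ^ 2 * M))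
  simp only [add_zero, hξ.eval_eq_zero] at hlim0
  have hle := le_of_tendsto_of_tendsto (hlim (s • ξ)) hlim0 (hM.mono fun ε hε => (hε s).1)
  exact pow_eq_zero_iff two_ne_zero |>.1 (le_antisymm (by simpa using hle) (sq_nonneg _))

theorem IsFlatDirection.eventually_add_smul_mem_hypCone (hξ : IsFlatDirection h v ξ)
    (hhom : h.IsHomogeneous d) (hhyp : IsHyperbolic h e) (hpos : 0 < eval e h)
    (hv : v ∈ hypCone h e) (he : 0 < e ⬝ᵥ polyGradient h v) :
    ∀ᶠ s : ℝ in nhds 0, v + s • ξ ∈ hypCone h e := by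
  obtain ⟨M, hM⟩ := hξ.exists_eventually_bounds hhom hhyp hpos hv he
  obtain ⟨δ, hδ, hsmall⟩ := mem_nhdsGT_iff_exists_Ioo_subset.1 hM
  have hlarge : ∀ᶠ s : ℝ in nhds 0, ∀ t, δ / 2 ≤ t → eval (v + s • ξ + t • e) h ≠ 0 := by
    have hcont : Continuous fun s : ℝ => v + s • ξ := by fun_prop
    refine ((isOpen_setOf_forall_le_eval_add_smul_ne_zero hhom hhyp.1
      (half_pos hδ)).preimage hcont).mem_nhds fun t ht => ?_
    simpa using (mem_hypCone_iff hhyp).1 hv t ((half_pos hδ).trans_le ht)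
  have hsq : ∀ᶠ s : ℝ in nhds 0, s ^ 2 * M < 1 :=
    ContinuousAt.eventually_lt (by fun_prop) continuousAt_const (by simp)
  filter_upwards [hlarge, hsq] with s hslarge hs
  refine (mem_hypCone_iff hhyp).2 fun t ht => ?_
  rcases le_or_gt (δ / 2) t with htδ | htδ
  · exact hslarge t htδ
  · rw [add_right_comm]
    exact (hsmall ⟨ht, htδ.trans (half_lt_self hδ)⟩ s).2 hs

theorem isFlatDirection_add_smul (hξ : ∀ s : ℝ, eval (v + s • ξ) h = 0) (s : ℝ) :
    IsFlatDirection h (v + s • ξ) ξ := by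
  have hzero : linePoly h (v + s • ξ) ξ = 0 :=
    Polynomial.funext fun t => by
      rw [eval_linePoly, add_assoc, ← add_smul, hξ, Polynomial.eval_zero]
  refine ⟨hξ s, ?_, ?_⟩
  · rw [← coeff_one_linePoly, hzero, Polynomial.coeff_zero]
  · rw [← two_mul_coeff_two_linePoly, hzero, Polynomial.coeff_zero, mul_zero]

theorem mem_hypCone_of_forall_add_smul_mem (hhom : h.IsHomogeneous d) (hhyp : IsHyperbolic h e)
    (hξ : ∀ s : ℝ, v + s • ξ ∈ hypCone h e) : ξ ∈ hypCone h e := by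
  have hcont : Continuous fun s : ℝ => s • v + ξ := by fun_prop
  have hlim : Filter.Tendsto (fun s : ℝ => s • v + ξ) (nhdsWithin 0 (Set.Ioi 0)) (nhds ξ) := by
    simpa using (hcont.tendsto 0).mono_left nhdsWithin_le_nhds
  refine (isClosed_hypCone hhom hhyp).mem_of_tendsto hlim ?_
  filter_upwards [self_mem_nhdsWithin] with s hs
  have hs' : 0 < s := hs
  simpa [smul_smul, hs'.ne'] using hypCone_smul_mem hhom hhyp (hξ s⁻¹) hs'.le

theorem eval_add_smul_eq_of_neg_mem_hypCone (hhom : h.IsHomogeneous d) (hhyp : IsHyperbolic h e)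
    (hξ : ξ ∈ hypCone h e) (hnξ : -ξ ∈ hypCone h e) (t : ℝ) :
    eval (ξ + t • e) h = t ^ d * eval e h := by
  have hne : ∀ s : ℝ, eval (e + s • ξ) h ≠ 0 := by
    intro s
    rcases le_total 0 s with hs | hs
    · simpa [add_comm] using eval_add_smul_ne_zero_of_mem_hypCone hhom hhyp hξ hs one_pos
    · simpa [add_comm] using
        eval_add_smul_ne_zero_of_mem_hypCone hhom hhyp hnξ (neg_nonneg.2 hs) one_pos
  have hconst : ∀ s : ℝ, eval (e + s • ξ) h = eval e h := by
    have hdeg : (linePoly h e ξ).degree = 0 := by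
      by_contra hdeg
      obtain ⟨r, hr⟩ := (realRooted_linePoly hhom hhyp ξ).splits.exists_eval_eq_zero hdeg
      exact hne r (by rwa [eval_linePoly] at hr)
    intro s
    rw [← eval_linePoly, Polynomial.eq_C_of_degree_eq_zero hdeg, coeff_zero_linePoly,
      Polynomial.eval_C]
  have hcont : Continuous fun t : ℝ => eval (ξ + t • e) h :=
    (continuous_eval h).comp' (by fun_prop)
  refine congrFun (hcont.ext_on (g := (· ^ d * eval e h)) (dense_compl_singleton 0) (by fun_prop)
    fun t ht => ?_) t
  have hscale : ξ + t • e = t • (e + t⁻¹ • ξ) := by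
    rw [smul_add, smul_inv_smul₀ ht, add_comm]
  simp only [hscale, eval_smul_of_isHomogeneous hhom, hconst]

theorem dotProduct_polyGradient_eq_zero_of_neg_mem_hypCone (hhom : h.IsHomogeneous d)
    (hd : 2 ≤ d) (hhyp : IsHyperbolic h e) (hξ : ξ ∈ hypCone h e) (hnξ : -ξ ∈ hypCone h e) :
    e ⬝ᵥ polyGradient h ξ = 0 := by
  have hderiv := hasDerivAt_eval_add_smul h ξ e 0
  simp only [eval_add_smul_eq_of_neg_mem_hypCone hhom hhyp hξ hnξ, zero_smul, add_zero] at hderiv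
  simpa [show d - 1 ≠ 0 by omega] using
    hderiv.unique ((hasDerivAt_pow d (0 : ℝ)).mul_const (eval e h))

/- A flat direction would produce a whole line in the boundary of the cone, hence a boundary point
in its lineality space, where the derivative of `h` vanishes. -/
theorem dotProduct_polyHessian_mulVec_neg (hhom : h.IsHomogeneous d) (hd : 2 ≤ d)
    (hhyp : IsHyperbolic h e) (hpos : 0 < eval e h)
    (hsmooth : ∀ a ∈ hypCone h e, eval a h = 0 → a ≠ 0 → 0 < e ⬝ᵥ polyGradient h a)
    (hv : v ∈ hypCone h e) (h0 : eval v h = 0) (hξ : ξ ≠ 0) (hline : ∀ s : ℝ, v + s • ξ ≠ 0)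
    (h1 : ξ ⬝ᵥ polyGradient h v = 0) : ξ ⬝ᵥ (polyHessian h v).mulVec ξ < 0 := by
  by_contra! h2
  have hzero : ∀ s : ℝ, eval (v + s • ξ) h = 0 :=
    IsFlatDirection.eval_add_smul_eq_zero ⟨h0, h1, h2⟩ hhom hhyp hpos hv
      (hsmooth v hv h0 (by simpa using hline 0))
  have hmem : {s : ℝ | v + s • ξ ∈ hypCone h e} = Set.univ := by
    refine IsClopen.eq_univ ⟨(isClosed_hypCone hhom hhyp).preimage (by fun_prop), ?_⟩
      ⟨0, by simpa using hv⟩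
    refine isOpen_iff_mem_nhds.2 fun s hs => ?_
    have hnear := (isFlatDirection_add_smul hzero s).eventually_add_smul_mem_hypCone hhom hhyp
      hpos hs (hsmooth _ hs (hzero s) (hline s))
    have hshift : Filter.Tendsto (fun t => t - s) (nhds s) (nhds 0) := by
      simpa using (continuous_sub_right s).tendsto s
    filter_upwards [hshift.eventually hnear] with t ht
    simpa [add_assoc, ← add_smul] using ht
  have hall : ∀ s : ℝ, v + s • ξ ∈ hypCone h e := Set.eq_univ_iff_forall.1 hmem
  have hmemξ : ξ ∈ hypCone h e := mem_hypCone_of_forall_add_smul_mem hhom hhyp hall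
  have hmemnξ : -ξ ∈ hypCone h e :=
    mem_hypCone_of_forall_add_smul_mem (v := v) hhom hhyp fun s => by simpa using hall (-s)
  have hevalξ : eval ξ h = 0 := by
    simpa [show d ≠ 0 by omega] using
      eval_add_smul_eq_of_neg_mem_hypCone hhom hhyp hmemξ hmemnξ 0
  exact (hsmooth ξ hmemξ hevalξ hξ).ne'
    (dotProduct_polyGradient_eq_zero_of_neg_mem_hypCone hhom hd hhyp hmemξ hmemnξ)

end FlatDirections

/-! ### Sums-of-squares certificates near a boundary point -/

section Certificates

variable {n d : ℕ}

theorem IsSeparatedKernel.exists_sum_smul_nonneg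
    {K : (Fin n → ℝ) → (Fin n → ℝ) → Matrix (Fin n) (Fin n) ℝ} (hK : IsSeparatedKernel K)
    {v : Fin n → ℝ} {δ : ℝ} (hδ : 0 < δ)
    (hv : ∀ ξ, δ * (ξ ⬝ᵥ ξ) ≤ ξ ⬝ᵥ (K v v).mulVec ξ) :
    ∃ (J : Type) (_ : Fintype J) (w : J → (Fin n → ℝ) → ℝ),
      (∀ j, Continuous (w j)) ∧ (∀ j, 0 < w j v) ∧
      ∀ᶠ u in nhds v, ∃ B : J → Matrix (Fin n) (Fin n) ℝ,
        (∀ j ξ, 0 ≤ ξ ⬝ᵥ (B j).mulVec ξ) ∧ ∀ x, K x u = ∑ j, w j x • B j := by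
  have hcont : Continuous (K v) := hK.continuous_right v
  obtain ⟨ι, _, m, c, hm, hc, hKmc⟩ := hK
  obtain ⟨M, hM, hcM⟩ := exists_pos_eventually_abs_dotProduct_mulVec_le hc v
  obtain ⟨η, hη, hηδ⟩ : ∃ η : ℝ, 0 < η ∧ Fintype.card ι * η * M ≤ δ / 2 := by
    refine ⟨δ / (2 * (Fintype.card ι + 1) * M), by positivity, ?_⟩
    field_simp
    linarith
  have hKv : ∀ᶠ u in nhds v, ∀ ξ, δ / 2 * (ξ ⬝ᵥ ξ) ≤ ξ ⬝ᵥ (K v u).mulVec ξ :=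
    eventually_le_dotProduct_mulVec hcont fun ξ hξ => by linarith [hξ ▸ hv ξ]
  -- With `Δ = m k x - m k v`, one has
  -- `Δ • c = (η + Δ) • (M • 1 + c) / 2 + (η - Δ) • (M • 1 - c) / 2 - (η * M) • 1`.
  refine ⟨Option (ι ⊕ ι), inferInstance, fun j x => j.elim 1 (Sum.elim
    (fun k => η + (m k x - m k v)) fun k => η - (m k x - m k v)), ?_, ?_, ?_⟩
  · rintro (_ | k | k)
    exacts [continuous_const, continuous_const.add ((hm k).sub continuous_const),
      continuous_const.sub ((hm k).sub continuous_const)]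
  · rintro (_ | k | k) <;> simp [hη]
  filter_upwards [hKv, hcM] with u hKu hu
  refine ⟨fun j => j.elim (K v u - (Fintype.card ι * η * M) • 1) (Sum.elim
    (fun k => (1 / 2 : ℝ) • (M • 1 + c k u)) fun k => (1 / 2 : ℝ) • (M • 1 - c k u)), ?_,
    fun x => ?_⟩
  · rintro (_ | k | k) ξ <;>
      simp only [Option.elim, Sum.elim_inl, Sum.elim_inr, Matrix.sub_mulVec, Matrix.add_mulVec,
        Matrix.smul_mulVec, Matrix.one_mulVec, dotProduct_sub, dotProduct_add, dotProduct_smul,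
        smul_eq_mul]
    · have hξ : 0 ≤ ξ ⬝ᵥ ξ := dotProduct_star_self_nonneg ξ
      linarith [hKu ξ, mul_le_mul_of_nonneg_right hηδ hξ]
    · linarith [neg_le_of_abs_le (hu k ξ)]
    · linarith [le_of_abs_le (hu k ξ)]
  · have hk : ∀ k, (η + (m k x - m k v)) • (1 / 2 : ℝ) • (M • 1 + c k u) +
        (η - (m k x - m k v)) • (1 / 2 : ℝ) • (M • 1 - c k u) =
        (η * M) • (1 : Matrix (Fin n) (Fin n) ℝ) + (m k x • c k u - m k v • c k u) :=
      fun k => by module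
    simp only [Fintype.sum_option, Fintype.sum_sum_type, Option.elim, Sum.elim_inl, Sum.elim_inr,
      ← Finset.sum_add_distrib, hk]
    rw [Finset.sum_add_distrib, Finset.sum_sub_distrib, ← hKmc, ← hKmc, Finset.sum_const,
      Finset.card_univ, ← Nat.cast_smul_eq_nsmul ℝ]
    module

variable {h : MvPolynomial (Fin n) ℝ} {e v a : Fin n → ℝ}

theorem exists_le_neg_dotProduct_polyHessian_mulVec (hhom : h.IsHomogeneous d) (hd : 2 ≤ d)
    (hhyp : IsHyperbolic h e) (hpos : 0 < eval e h)
    (hsmooth : ∀ a ∈ hypCone h e, eval a h = 0 → a ≠ 0 → 0 < e ⬝ᵥ polyGradient h a)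
    (hv : v ∈ hypCone h e) (h0 : eval v h = 0) (hav : a ⬝ᵥ v = 1) :
    ∃ c δ : ℝ, 0 < δ ∧ ∀ ξ, δ * (ξ ⬝ᵥ ξ) ≤
      c * ((ξ ⬝ᵥ polyGradient h v) ^ 2 + (a ⬝ᵥ ξ) ^ 2) - ξ ⬝ᵥ (polyHessian h v).mulVec ξ := by
  obtain ⟨c, δ, hδ, hcδ⟩ := exists_add_mul_le_neg_mul_dotProduct_self
    (A := fun ξ => ξ ⬝ᵥ (polyHessian h v).mulVec ξ)
    (B := fun ξ => (ξ ⬝ᵥ polyGradient h v) ^ 2 + (a ⬝ᵥ ξ) ^ 2) (by fun_prop) (by fun_prop)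
    (smul_dotProduct_mulVec_smul _)
    (fun r ξ => by simp only [smul_dotProduct, dotProduct_smul, smul_eq_mul]; ring)
    (fun ξ => by positivity) fun ξ hξ hB => by
      obtain ⟨h1, ha⟩ := (add_eq_zero_iff_of_nonneg (sq_nonneg _) (sq_nonneg _)).1 hB
      refine dotProduct_polyHessian_mulVec_neg hhom hd hhyp hpos hsmooth hv h0 hξ (fun s hs => ?_)
        (pow_eq_zero_iff two_ne_zero |>.1 h1)
      have := congrArg (a ⬝ᵥ ·) hs
      simp [dotProduct_add, hav, pow_eq_zero_iff two_ne_zero |>.1 ha] at this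
  exact ⟨c, δ, hδ, fun ξ => by linarith [hcδ ξ]⟩

/- The second-order Taylor formula is applied to `h * (1 - c / 2 * h)` instead of `h`: both have the
same gradient on the hypersurface `h = 0`, but the Hessian of the former is more negative. -/
theorem exists_isSeparatedKernel_dotProduct_polyGradient_eq (hhom : h.IsHomogeneous d)
    (h0 : eval v h = 0) {c δ : ℝ} (hc : ∀ ξ, δ * (ξ ⬝ᵥ ξ) ≤
      c * ((ξ ⬝ᵥ polyGradient h v) ^ 2 + (a ⬝ᵥ ξ) ^ 2) - ξ ⬝ᵥ (polyHessian h v).mulVec ξ) :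
    ∃ K, IsSeparatedKernel K ∧ (∀ ξ, δ / 2 * (ξ ⬝ᵥ ξ) ≤ ξ ⬝ᵥ (K v v).mulVec ξ) ∧
      ∀ u x, a ⬝ᵥ u = 1 → a ⬝ᵥ x = 1 → eval u h = 0 → x ⬝ᵥ polyGradient h u =
        eval x h * (1 - c / 2 * eval x h) + (x - u) ⬝ᵥ (K x u).mulVec (x - u) := by
  set g : MvPolynomial (Fin n) ℝ := C 1 + C (-(c / 2)) * h with hg
  have hgrad (u) (hu : eval u h = 0) : polyGradient (h * g) u = polyGradient h u := by
    simp [polyGradient_mul, hg, hu]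
  have hgradg : polyGradient g v = -(c / 2) • polyGradient h v := by
    simp only [hg, polyGradient_add, polyGradient_mul, polyGradient_C, eval_C, smul_zero, add_zero,
      zero_add]
  have hhess : polyHessian (h * g) v = polyHessian h v -
      c • Matrix.vecMulVec (polyGradient h v) (polyGradient h v) := by
    have hgv : eval v g = 1 := by simp [hg, h0]
    rw [polyHessian_mul, hgradg, h0, hgv, Matrix.vecMulVec_smul, Matrix.smul_vecMulVec]
    module
  obtain ⟨R, hR, hRx, hRv⟩ := exists_taylor_eval (h * g)
  refine ⟨fun x u => (c / 2) • Matrix.vecMulVec a a + (-1 : ℝ) • R x u,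
    (IsSeparatedKernel.of_continuous continuous_const).add (hR.smul continuous_const),
    fun ξ => ?_, fun u x hu hx hu0 => ?_⟩
  · have := hRv v ξ
    simp only [hhess, Matrix.sub_mulVec, Matrix.add_mulVec, Matrix.smul_mulVec, dotProduct_add,
      dotProduct_sub, dotProduct_smul, dotProduct_vecMulVec_mulVec, smul_eq_mul,
      dotProduct_comm (polyGradient h v) ξ] at this ⊢
    linarith [hc ξ]
  · have htaylor := hRx u x
    have hEuler : u ⬝ᵥ polyGradient h u = 0 := by simp [dotProduct_polyGradient_self u hhom, hu0]
    have hxu : a ⬝ᵥ (x - u) = 0 := by rw [dotProduct_sub, hx, hu, sub_self]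
    rw [hgrad u hu0, sub_dotProduct, hEuler, sub_zero] at htaylor
    simp only [Matrix.add_mulVec, Matrix.smul_mulVec, dotProduct_add, dotProduct_smul,
      dotProduct_vecMulVec_mulVec, hxu, smul_eq_mul]
    simp only [hg, map_mul, map_add, eval_C, hu0] at htaylor
    linarith

theorem exists_dotProduct_polyGradient_eq_sum (hhom : h.IsHomogeneous d) (hd : 2 ≤ d)
    (hhyp : IsHyperbolic h e) (hpos : 0 < eval e h)
    (hsmooth : ∀ a ∈ hypCone h e, eval a h = 0 → a ≠ 0 → 0 < e ⬝ᵥ polyGradient h a)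
    (hv : v ∈ hypCone h e) (h0 : eval v h = 0) (hav : a ⬝ᵥ v = 1) :
    ∃ (J : Type) (_ : Fintype J) (w : J → (Fin n → ℝ) → ℝ),
      (∀ᶠ x in nhds v, x ∈ hypCone h e → ∀ j, 0 ≤ w j x) ∧
      ∀ᶠ u in nhds v, a ⬝ᵥ u = 1 → eval u h = 0 →
        ∃ B : J → Matrix (Fin n) (Fin n) ℝ, (∀ j ξ, 0 ≤ ξ ⬝ᵥ (B j).mulVec ξ) ∧
          ∀ x, a ⬝ᵥ x = 1 → x ⬝ᵥ polyGradient h u = ∑ j, w j x * (x ⬝ᵥ (B j).mulVec x) := by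
  obtain ⟨c, δ, hδ, hcδ⟩ :=
    exists_le_neg_dotProduct_polyHessian_mulVec hhom hd hhyp hpos hsmooth hv h0 hav
  obtain ⟨K, hK, hKv, hKx⟩ := exists_isSeparatedKernel_dotProduct_polyGradient_eq hhom h0 hcδ
  obtain ⟨J, _, w, hw, hwv, hwK⟩ := hK.exists_sum_smul_nonneg (half_pos hδ) hKv
  have hev : ∀ᶠ x in nhds v, 0 < 1 - c / 2 * eval x h :=
    (continuous_const.sub ((continuous_eval h).const_mul (c / 2))).tendsto v
      |>.eventually_const_lt (by simp [h0])
  refine ⟨Option J, inferInstance,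
    fun j x => j.elim (eval x h * (1 - c / 2 * eval x h)) fun j => w j x, ?_, ?_⟩
  · have hwx : ∀ᶠ x in nhds v, ∀ j, 0 < w j x :=
      Filter.eventually_all.2 fun j => ((hw j).tendsto v).eventually_const_lt (hwv j)
    filter_upwards [hev, hwx] with x hx hwx hxC
    rintro (_ | j)
    exacts [mul_nonneg (eval_nonneg_of_mem_hypCone hhom hhyp hpos hxC) hx.le, (hwx j).le]
  · filter_upwards [hwK] with u ⟨B, hB, hKB⟩ hau hu
    -- `L x = x - (a ⬝ᵥ x) • u` is the homogenisation of `x - u`.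
    set L : Matrix (Fin n) (Fin n) ℝ := 1 - Matrix.vecMulVec u a
    have hL (B : Matrix (Fin n) (Fin n) ℝ) (x : Fin n → ℝ) :
        x ⬝ᵥ (L.transpose * B * L).mulVec x = L.mulVec x ⬝ᵥ B.mulVec (L.mulVec x) := by
      simp only [← Matrix.mulVec_mulVec, Matrix.dotProduct_mulVec x, Matrix.vecMul_transpose]
    refine ⟨fun j => j.elim (Matrix.vecMulVec a a) fun j => L.transpose * B j * L, ?_,
      fun x hx => ?_⟩
    · rintro (_ | j) ξ
      · simpa only [Option.elim, dotProduct_vecMulVec_mulVec] using mul_self_nonneg _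
      · simpa only [Option.elim, hL] using hB j _
    · have hLx : L.mulVec x = x - u := by
        simp [L, Matrix.sub_mulVec, Matrix.vecMulVec_mulVec, hx]
      simp only [Fintype.sum_option, Option.elim, dotProduct_vecMulVec_mulVec, hx, mul_one, hL,
        hLx, hKx u x hau hx hu, hKB x, Matrix.sum_mulVec, dotProduct_sum, Matrix.smul_mulVec,
        dotProduct_smul, smul_eq_mul]

end Certificates

/-! ### Shadow cones near a boundary point -/

section LocalShadow

variable {n d : ℕ} {h : MvPolynomial (Fin n) ℝ} {e v a : Fin n → ℝ}

theorem eventually_dotProduct_pos (hav : a ⬝ᵥ v = 1) : ∀ᶠ x in nhds v, 0 < a ⬝ᵥ x :=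
  ((by fun_prop : Continuous (a ⬝ᵥ ·)).tendsto v).eventually_const_lt (by simp [hav])

theorem tendsto_inv_dotProduct_smul (hav : a ⬝ᵥ v = 1) :
    Filter.Tendsto (fun x => (a ⬝ᵥ x)⁻¹ • x) (nhds v) (nhds v) := by
  have hcont : ContinuousAt (fun x => (a ⬝ᵥ x)⁻¹ • x) v :=
    ((by fun_prop : Continuous (a ⬝ᵥ ·)).continuousAt.inv₀ (by simp [hav])).smul continuousAt_id
  simpa [hav] using hcont.tendsto

theorem IsShadowCone.exists_subset_mem_nhdsWithin {S C : Set (Fin n → ℝ)} (hS : IsShadowCone S)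
    (hav : a ⬝ᵥ v = 1) (h0 : 0 ∈ C) (hC : ∀ c : ℝ, 0 ≤ c → ∀ x ∈ C, c • x ∈ C)
    (hSC : ∀ᶠ x in nhds v, x ∈ S → x ∈ C)
    (hCS : ∀ᶠ x in nhds v, x ∈ C → a ⬝ᵥ x = 1 → x ∈ S) :
    ∃ T ⊆ C, IsShadowCone T ∧ T ∈ nhdsWithin v C := by
  obtain ⟨r, hr, hball⟩ := Metric.nhds_basis_closedBall.eventually_iff.1 hSC
  have hscale (x) (hx : 0 < a ⬝ᵥ x) :
      (a ⬝ᵥ x)⁻¹ • x ∈ Metric.closedBall v r ↔ ‖x - (a ⬝ᵥ x) • v‖ ≤ r * (a ⬝ᵥ x) := by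
    rw [mem_closedBall_iff_norm, ← inv_smul_smul₀ hx.ne' v, ← smul_sub, norm_smul, norm_inv,
      Real.norm_of_nonneg hx.le, inv_mul_le_iff₀ hx, inv_smul_smul₀ hx.ne', mul_comm]
  refine ⟨S ∩ {x | ‖x - (a ⬝ᵥ x) • v‖ ≤ r * (a ⬝ᵥ x)}, ?_,
    hS.inter (isShadowCone_setOf_norm_sub_le (dotProductBilin ℝ ℝ a) v hr), ?_⟩
  · rintro x ⟨hxS, hx⟩
    obtain hax | hax := (nonneg_of_mul_nonneg_right ((norm_nonneg _).trans hx) hr).eq_or_lt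
    · rw [Set.mem_ofPred_eq, ← hax, zero_smul, sub_zero, mul_zero, norm_le_zero_iff] at hx
      rwa [hx]
    · rw [← smul_inv_smul₀ hax.ne' x]
      exact hC _ hax.le _ (hball ((hscale x hax).2 hx) (hS.smul_mem (inv_nonneg.2 hax.le) hxS))
  · filter_upwards [self_mem_nhdsWithin, mem_nhdsWithin_of_mem_nhds (eventually_dotProduct_pos hav),
      mem_nhdsWithin_of_mem_nhds <| (tendsto_inv_dotProduct_smul hav).eventually <|
        hCS.and (Metric.closedBall_mem_nhds v hr)] with x hxC hax hx
    refine ⟨?_, (hscale x hax).1 hx.2⟩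
    rw [← smul_inv_smul₀ hax.ne' x]
    refine hS.smul_mem hax.le (hx.1 (hC _ (inv_nonneg.2 hax.le) x hxC) ?_)
    rw [dotProduct_smul, smul_eq_mul, inv_mul_cancel₀ hax.ne']

theorem dotProduct_polyGradient_neg_of_eval_add_smul_eq_zero (hhom : h.IsHomogeneous d)
    {y : Fin n → ℝ} {c t : ℝ} (hc : c ≠ 0) (ht : 0 < t) (hroot : eval (y + t • e) h = 0)
    (he : 0 < e ⬝ᵥ polyGradient h (c • (y + t • e))) :
    y ⬝ᵥ polyGradient h (c • (y + t • e)) < 0 := by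
  have hEuler := dotProduct_polyGradient_self (c • (y + t • e)) hhom
  rw [eval_smul_of_isHomogeneous hhom, hroot, mul_zero, mul_zero, smul_dotProduct, smul_eq_mul,
    mul_eq_zero_iff_left hc, add_dotProduct, smul_dotProduct, smul_eq_mul] at hEuler
  linarith [mul_pos ht he]

theorem eventually_mem_hypCone_of_dotProduct_polyGradient_nonneg (hhom : h.IsHomogeneous d)
    (hhyp : IsHyperbolic h e) (hv : v ∈ hypCone h e) (hev : 0 < e ⬝ᵥ polyGradient h v)
    (hav : a ⬝ᵥ v = 1) {P : (Fin n → ℝ) → Prop} (hP : ∀ᶠ u in nhds v, P u) :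
    ∀ᶠ y in nhds v, (∀ u, P u → a ⬝ᵥ u = 1 → eval u h = 0 → 0 ≤ y ⬝ᵥ polyGradient h u) →
      y ∈ hypCone h e := by
  have hgrad : ∀ᶠ u in nhds v, 0 < e ⬝ᵥ polyGradient h u :=
    (continuous_const.dotProduct (continuous_polyGradient h)).tendsto v
      |>.eventually_const_lt hev
  have hadd : Filter.Tendsto (fun p : (Fin n → ℝ) × ℝ => p.1 + p.2 • e) (nhds v ×ˢ nhds 0)
      (nhds v) := by
    rw [← nhds_prod_eq]
    exact (by fun_prop : Continuous fun p : (Fin n → ℝ) × ℝ => p.1 + p.2 • e).tendsto' _ _ (by simp)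
  obtain ⟨Q, hQ, R, hR, hQR⟩ := Filter.eventually_prod_iff.1 <| hadd.eventually <|
    (eventually_dotProduct_pos hav).and <|
      (tendsto_inv_dotProduct_smul hav).eventually (hP.and hgrad)
  obtain ⟨τ, hτ, hτR⟩ := Metric.eventually_nhds_iff.1 hR
  have hfar := (isOpen_setOf_forall_le_eval_add_smul_ne_zero hhom hhyp.1 hτ).mem_nhds
    (fun t ht => (mem_hypCone_iff hhyp).1 hv t (hτ.trans_le ht) : v ∈ _)
  filter_upwards [hQ, hfar] with y hy hyfar hnonneg
  refine (mem_hypCone_iff hhyp).2 fun t ht hroot => ?_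
  have htτ : t < τ := lt_of_not_ge fun hle => hyfar t hle hroot
  have htR : R t := hτR (by simpa [abs_of_pos ht])
  obtain ⟨hapos, hPu, hgradu⟩ := hQR hy htR
  refine (hnonneg _ hPu ?_ ?_).not_gt (dotProduct_polyGradient_neg_of_eval_add_smul_eq_zero hhom
    (inv_ne_zero hapos.ne') ht hroot hgradu)
  · rw [dotProduct_smul, smul_eq_mul, inv_mul_cancel₀ hapos.ne']
  · rw [eval_smul_of_isHomogeneous hhom, hroot, mul_zero]

theorem exists_isShadowCone_mem_nhdsWithin_hypCone (hhom : h.IsHomogeneous d) (hd : 2 ≤ d)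
    (hhyp : IsHyperbolic h e) (hpos : 0 < eval e h)
    (hsmooth : ∀ a ∈ hypCone h e, eval a h = 0 → a ≠ 0 → 0 < e ⬝ᵥ polyGradient h a)
    (hv : v ∈ hypCone h e) (h0 : eval v h = 0) (hv0 : v ≠ 0) :
    ∃ T ⊆ hypCone h e, IsShadowCone T ∧ T ∈ nhdsWithin v (hypCone h e) := by
  obtain ⟨a, hav⟩ : ∃ a, a ⬝ᵥ v = 1 := by
    refine ⟨(v ⬝ᵥ v)⁻¹ • v, ?_⟩
    rw [smul_dotProduct, smul_eq_mul, inv_mul_cancel₀ (by simpa using hv0)]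
  obtain ⟨J, _, w, hw, hcert⟩ :=
    exists_dotProduct_polyGradient_eq_sum hhom hd hhyp hpos hsmooth hv h0 hav
  obtain ⟨S, hS, hKS, hSl⟩ := exists_isShadowCone_of_posSemidef
    (K := {x | a ⬝ᵥ x = 1 ∧ ∀ j, 0 ≤ w j x}) (F := fun x j => w j x • Matrix.vecMulVec x x)
    fun x hx j => by simpa using (Matrix.posSemidef_vecMulVec_self_star x).smul (hx.2 j)
  have htangent : ∀ᶠ u in nhds v, a ⬝ᵥ u = 1 → eval u h = 0 →
      ∀ y ∈ S, 0 ≤ y ⬝ᵥ polyGradient h u := by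
    filter_upwards [hcert] with u hu hau hu0 y hy
    obtain ⟨B, hB, hsum⟩ := hu hau hu0
    rw [dotProduct_comm]
    refine hSl (dotProductBilin ℝ ℝ (polyGradient h u)) B hB (fun x hx => ?_) y hy
    simp [dotProduct_comm _ x, hsum x hx.1, Matrix.mul_vecMulVec, Matrix.trace_vecMulVec]
  refine hS.exists_subset_mem_nhdsWithin hav (zero_mem_hypCone hhom hhyp)
    (fun c hc x hx => hypCone_smul_mem hhom hhyp hx hc) ?_ ?_
  · filter_upwards [eventually_mem_hypCone_of_dotProduct_polyGradient_nonneg hhom hhyp hv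
      (hsmooth v hv h0 hv0) hav htangent] with y hy hyS
    exact hy fun u hu hau hu0 => hu hau hu0 y hyS
  · filter_upwards [hw] with x hx hxC hax
    exact hKS ⟨hax, hx hxC⟩

end LocalShadow

/-! ### Gluing along the boundary -/

section Global

variable {n d : ℕ} {h : MvPolynomial (Fin n) ℝ} {e a : Fin n → ℝ}

theorem coeff_single_one_aeval_X_add_C (i : Fin n) :
    coeff (Finsupp.single i 1) (aeval (fun i => X i + C (a i)) h) = polyGradient h a i := by
  have hpderiv : pderiv i (aeval (fun i => X i + C (a i)) h) =
      aeval (fun i => (X i + C (a i) : MvPolynomial (Fin n) ℝ)) (pderiv i h) := by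
    simp only [aeval_eq_bind₁]
    induction h using MvPolynomial.induction_on with
    | C c => simp
    | add p q hp hq => simp [hp, hq]
    | mul_X p j hp => simp [hp, pderiv_X, Pi.single_apply, apply_ite]
  have hcoeff := coeff_pderiv (i := i) (aeval (fun i => X i + C (a i)) h) 0
  have heval : coeff 0 (aeval (fun i => (X i + C (a i) : MvPolynomial (Fin n) ℝ)) (pderiv i h)) =
      eval a (pderiv i h) := by
    rw [← constantCoeff_eq, map_aeval]
    simp only [constantCoeff_comp_algebraMap, map_add, constantCoeff_X, constantCoeff_C, zero_add]
    rfl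
  rw [hpderiv, heval] at hcoeff
  simpa [polyGradient] using hcoeff.symm

theorem polyGradient_ne_zero_of_multAt_eq_one (ha : multAt h a = 1) : polyGradient h a ≠ 0 := by
  have hcomp : homogeneousComponent 1 (aeval (fun i => X i + C (a i)) h) ≠ 0 := by
    have := Nat.sInf_mem (Nat.nonempty_of_sInf_eq_succ (k := 0) ha)
    rwa [show sInf _ = 1 from ha] at this
  refine fun hgrad => hcomp (MvPolynomial.ext _ _ fun m => ?_)
  rw [coeff_homogeneousComponent, coeff_zero]
  split_ifs with hm
  · obtain ⟨i, rfl⟩ := (Finsupp.sum_eq_one_iff _).1 hm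
    rw [coeff_single_one_aeval_X_add_C, hgrad, Pi.zero_apply]
  · rfl

theorem dotProduct_polyGradient_nonneg_of_mem_hypCone (hhom : h.IsHomogeneous d)
    (hhyp : IsHyperbolic h e) (hpos : 0 < eval e h) (ha : a ∈ hypCone h e) (h0 : eval a h = 0)
    {w : Fin n → ℝ} (hw : w ∈ hypCone h e) : 0 ≤ w ⬝ᵥ polyGradient h a := by
  have hderiv := hasDerivAt_eval_add_smul h a w 0
  rw [zero_smul, add_zero] at hderiv
  refine ge_of_tendsto hderiv.tendsto_slope_zero_right ?_
  filter_upwards [self_mem_nhdsWithin] with t ht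
  have := eval_nonneg_of_mem_hypCone hhom hhyp hpos
    (hypCone_add_mem hhom hhyp ha (hypCone_smul_mem hhom hhyp hw (le_of_lt ht)))
  simpa [h0] using mul_nonneg (inv_nonneg.2 (le_of_lt ht)) this

theorem dotProduct_polyGradient_pos_of_ne_zero (hhom : h.IsHomogeneous d)
    (hhyp : IsHyperbolic h e) (hpos : 0 < eval e h) (ha : a ∈ hypCone h e) (h0 : eval a h = 0)
    (hgrad : polyGradient h a ≠ 0) : 0 < e ⬝ᵥ polyGradient h a := by
  have hcone : ∀ᶠ s : ℝ in nhds 0, e - s • polyGradient h a ∈ hypCone h e :=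
    (by fun_prop : Continuous fun s : ℝ => e - s • polyGradient h a).tendsto' 0 e (by simp)
      |>.eventually (hypCone_mem_nhds hhom hhyp (self_mem_hypCone hhom hhyp) hhyp.1)
  obtain ⟨s, hs, hs0⟩ := ((hcone.filter_mono nhdsWithin_le_nhds).and
    (self_mem_nhdsWithin (s := Set.Ioi (0 : ℝ)))).exists
  have hnonneg := dotProduct_polyGradient_nonneg_of_mem_hypCone hhom hhyp hpos ha h0 hs
  have hsq : 0 < polyGradient h a ⬝ᵥ polyGradient h a := by
    simpa using Matrix.dotProduct_star_self_pos_iff.2 hgrad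
  rw [sub_dotProduct, smul_dotProduct, smul_eq_mul] at hnonneg
  linarith [mul_pos hs0 hsq]

theorem eval_eq_eval_zero_of_isHomogeneous_zero {p : MvPolynomial (Fin n) ℝ}
    (hp : p.IsHomogeneous 0) (x : Fin n → ℝ) : eval x p = eval 0 p := by
  simpa using (eval_smul_of_isHomogeneous hp 0 x).symm

theorem isShadowCone_hypCone_of_le_one (hhom : h.IsHomogeneous d) (hd : d ≤ 1)
    (hhyp : IsHyperbolic h e) (hpos : 0 < eval e h) : IsShadowCone (hypCone h e) := by
  interval_cases d
  · suffices hypCone h e = Set.univ by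
      rw [this]
      exact .univ
    refine Set.eq_univ_of_forall fun x => (mem_hypCone_iff hhyp).2 fun t _ => ?_
    rw [eval_eq_eval_zero_of_isHomogeneous_zero hhom,
      ← eval_eq_eval_zero_of_isHomogeneous_zero hhom e]
    exact hpos.ne'
  · have heval (x) : eval x h = dotProductBilin ℝ ℝ (polyGradient h 0) x := by
      have hgrad : polyGradient h x = polyGradient h 0 :=
        funext fun i => eval_eq_eval_zero_of_isHomogeneous_zero hhom.pderiv x
      simpa [hgrad, dotProduct_comm x] using (dotProduct_polyGradient_self x hhom).symm
    convert IsShadowCone.setOf_nonneg (dotProductBilin ℝ ℝ (polyGradient h 0)) using 1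
    ext x
    rw [Set.mem_ofPred_eq, ← heval]
    refine ⟨eval_nonneg_of_mem_hypCone hhom hhyp hpos,
      fun hx => (mem_hypCone_iff hhyp).2 fun t ht => ?_⟩
    rw [heval, map_add, map_smul, ← heval, ← heval, smul_eq_mul]
    positivity

theorem exists_nonneg_eval_sub_smul_eq_zero (hhom : h.IsHomogeneous d) (hd : d ≠ 0)
    (hhyp : IsHyperbolic h e) (ha : a ∈ hypCone h e) :
    ∃ t : ℝ, 0 ≤ t ∧ eval (a - t • e) h = 0 := by
  by_contra! hne
  have hmem (t : ℝ) (ht : 0 < t) : t⁻¹ • a - e ∈ hypCone h e := by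
    suffices a - t • e ∈ hypCone h e by
      simpa [smul_sub, inv_smul_smul₀ ht.ne'] using
        hypCone_smul_mem hhom hhyp this (inv_nonneg.2 ht.le)
    refine (mem_hypCone_iff hhyp).2 fun s _ => ?_
    rcases le_or_gt s t with hst | hst
    · convert hne (t - s) (sub_nonneg.2 hst) using 3
      module
    · convert (mem_hypCone_iff hhyp).1 ha (s - t) (sub_pos.2 hst) using 3
      module
  have hlim : Filter.Tendsto (fun t : ℝ => t⁻¹ • a - e) Filter.atTop (nhds (-e)) := by
    simpa using ((tendsto_inv_atTop_zero (𝕜 := ℝ)).smul_const a).sub_const e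
  have hneg : -e ∈ hypCone h e := (isClosed_hypCone hhom hhyp).mem_of_tendsto hlim
    (Filter.eventually_atTop.2 ⟨1, fun t ht => hmem t (by positivity)⟩)
  refine (mem_hypCone_iff hhyp).1 hneg 1 one_pos ?_
  simpa [zero_pow hd] using eval_smul_of_isHomogeneous hhom 0 e

theorem exists_add_smul_eq_of_mem_hypCone (hhom : h.IsHomogeneous d) (hd : d ≠ 0)
    (hhyp : IsHyperbolic h e) (ha : a ∈ hypCone h e) :
    ∃ y ∈ hypCone h e, eval y h = 0 ∧ ∃ t : ℝ, 0 ≤ t ∧ y + t • e = a := by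
  have hclosed : IsClosed {t : ℝ | 0 ≤ t ∧ eval (a - t • e) h = 0} :=
    isClosed_Ici.inter (isClosed_singleton.preimage ((continuous_eval h).comp' (by fun_prop)))
  obtain ⟨⟨ht0, ht⟩, hmin⟩ := hclosed.isLeast_csInf
    (exists_nonneg_eval_sub_smul_eq_zero hhom hd hhyp ha) ⟨0, fun t ht => ht.1⟩
  set t := sInf {t : ℝ | 0 ≤ t ∧ eval (a - t • e) h = 0}
  refine ⟨a - t • e, (mem_hypCone_iff hhyp).2 fun s hs hroot => ?_, ht, t, ht0, by simp⟩
  rw [show a - t • e + s • e = a - (t - s) • e by module] at hroot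
  rcases le_or_gt s t with hst | hst
  · linarith [hmin ⟨sub_nonneg.2 hst, hroot⟩]
  · refine (mem_hypCone_iff hhyp).1 ha (s - t) (sub_pos.2 hst) ?_
    rwa [show a + (s - t) • e = a - (t - s) • e by module]

theorem exists_isShadowCone_boundary_subset (hhom : h.IsHomogeneous d) (hd : 2 ≤ d)
    (hhyp : IsHyperbolic h e) (hpos : 0 < eval e h)
    (hsmooth : ∀ a ∈ hypCone h e, eval a h = 0 → a ≠ 0 → 0 < e ⬝ᵥ polyGradient h a) :
    ∃ S ⊆ hypCone h e, IsShadowCone S ∧ ∀ x ∈ hypCone h e, eval x h = 0 → x ∈ S := by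
  have hK : IsCompact (Metric.sphere 0 1 ∩ (hypCone h e ∩ (eval · h) ⁻¹' {0})) :=
    (isCompact_sphere _ _).inter_right <| (isClosed_hypCone hhom hhyp).inter <|
      isClosed_singleton.preimage (continuous_eval h)
  obtain ⟨S, hSC, hS, hKS⟩ := exists_isShadowCone_of_isCompact hK (zero_mem_hypCone hhom hhyp)
    (fun x hx y hy => hypCone_add_mem hhom hhyp hx hy) fun v hv => by
      obtain ⟨T, hTC, hT, hTv⟩ := exists_isShadowCone_mem_nhdsWithin_hypCone hhom hd hhyp hpos
        hsmooth hv.2.1 hv.2.2 (ne_zero_of_mem_unit_sphere ⟨v, hv.1⟩)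
      exact ⟨T, hTC, hT, nhdsWithin_mono v (fun x hx => hx.2.1) hTv⟩
  refine ⟨S, hSC, hS, fun x hx hx0 => ?_⟩
  rcases eq_or_ne x 0 with rfl | hne
  · exact hS.zero_mem
  · have hnorm := norm_pos_iff.2 hne
    rw [← smul_inv_smul₀ hnorm.ne' x]
    refine hS.smul_mem hnorm.le (hKS ⟨?_, hypCone_smul_mem hhom hhyp hx (by positivity), ?_⟩)
    · simp [norm_smul, hnorm.ne']
    · simp [eval_smul_of_isHomogeneous hhom, hx0]

theorem isShadowCone_hypCone (hhom : h.IsHomogeneous d) (hhyp : IsHyperbolic h e)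
    (hpos : 0 < eval e h)
    (hsmooth : ∀ a ∈ hypCone h e, eval a h = 0 → a ≠ 0 → polyGradient h a ≠ 0) :
    IsShadowCone (hypCone h e) := by
  rcases le_or_gt d 1 with hd | hd
  · exact isShadowCone_hypCone_of_le_one hhom hd hhyp hpos
  obtain ⟨S, hSC, hS, hboundary⟩ := exists_isShadowCone_boundary_subset hhom hd hhyp hpos
    fun a ha h0 hne =>
      dotProduct_polyGradient_pos_of_ne_zero hhom hhyp hpos ha h0 (hsmooth a ha h0 hne)
  convert hS.add (.ray e) using 1
  ext x
  refine ⟨fun hx => ?_, ?_⟩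
  · obtain ⟨y, hy, hy0, t, ht, rfl⟩ :=
      exists_add_smul_eq_of_mem_hypCone hhom (Nat.ne_zero_of_lt hd) hhyp hx
    exact ⟨y, hboundary y hy hy0, t • e, ⟨t, ht, rfl⟩, rfl⟩
  · rintro ⟨y, hy, _, ⟨t, ht, rfl⟩, rfl⟩
    exact hypCone_add_mem hhom hhyp (hSC hy)
      (hypCone_smul_mem hhom hhyp (self_mem_hypCone hhom hhyp) ht)

theorem linePoly_neg (a v : Fin n → ℝ) : linePoly (-h) a v = -linePoly h a v := by
  simp [linePoly]

theorem hypCone_neg : hypCone (-h) e = hypCone h e := by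
  simp [hypCone, NonnegRealRooted, linePoly_neg]

theorem isHyperbolic_neg (hhyp : IsHyperbolic h e) : IsHyperbolic (-h) e := by
  simpa [IsHyperbolic, RealRooted, linePoly_neg] using hhyp

end Global

/-- If `h` is homogeneous and hyperbolic with respect to `e`, and every
non-zero boundary point of the hyperbolicity cone `Λ_e(h)` is a smooth point of `h`
(multiplicity 1), then `Λ_e(h)` is a spectrahedral shadow. -/
theorem smooth_hyperbolicity_cone_is_spectrahedral_shadow
    {n d : ℕ} (h : MvPolynomial (Fin n) ℝ) (e : Fin n → ℝ)
    (hhom : h.IsHomogeneous d) (hhyp : IsHyperbolic h e)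
    (hsmooth : ∀ a ∈ frontier (hypCone h e), a ≠ 0 → multAt h a = 1) :
    IsSpectrahedralShadowCone (hypCone h e) := by
  have hgrad : ∀ a ∈ hypCone h e, eval a h = 0 → a ≠ 0 → polyGradient h a ≠ 0 :=
    fun a ha h0 hne =>
      polyGradient_ne_zero_of_multAt_eq_one (hsmooth a (mem_frontier_hypCone hhyp ha h0) hne)
  refine IsShadowCone.isSpectrahedralShadowCone ?_
  rcases lt_or_gt_of_ne hhyp.1 with hneg | hpos
  · rw [← hypCone_neg]
    refine isShadowCone_hypCone hhom.neg (isHyperbolic_neg hhyp) (by simpa using hneg) ?_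
    simpa [hypCone_neg, polyGradient_neg] using hgrad
  · exact isShadowCone_hypCone hhom hhyp hpos hgrad
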